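/- Fix an even integer c ≥ 6. Then for each fixed R_x ∈ {x³, x³·s_c⁻¹}, the group G_Q(c, R_x, y³·s₃⁻²·s₄⁻¹·s_c⁻¹) is isomorphic to the group G_Q(c, R_x, y³·s₃⁻²·s₄⁻¹·s_c⁻²); moreover the four groups G_Q(c, x³, y³·s₃⁻²·s₄⁻¹), G_Q(c, x³·s_c⁻¹, y³·s₃⁻²·s₄⁻¹), G_Q(c, x³, y³·s₃⁻²·s₄⁻¹·s_c⁻¹), G_Q(c, x³·s_c⁻¹, y³·s₃⁻²·s₄⁻¹·s_c⁻¹) are pairwise non-isomorphic. -/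

import Mathlib

/-- The commutator `[g,h] = g⁻¹h⁻¹gh`. -/
def fcomm {G : Type*} [Group G] (g h : G) : G := g⁻¹ * h⁻¹ * g * h

namespace GQdef

/-- The generator `x` (as a word in the free group). -/
def xw : FreeGroup ℕ := FreeGroup.of 0

/-- The generator `y`. -/
def yw : FreeGroup ℕ := FreeGroup.of 1

/-- The generator `t₃`. -/
def t3w : FreeGroup ℕ := FreeGroup.of 2

/-- The generator `s_j` (meaningful for `2 ≤ j ≤ c`). -/
def sw (j : ℕ) : FreeGroup ℕ := FreeGroup.of (j + 1)

/-- The defining relators of `G_Q(c, R_x, R_y)`: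
`s₂ = [y,x]`, `t₃ = [s₂,y]`, `s_j = [s_{j−1},x]` for `3 ≤ j ≤ c`,
`s_j³ = s_{j+2}²·s_{j+3}` for `2 ≤ j ≤ c−3`, `s_{c−2}³ = s_c²`, `t₃³ = 1`,
`R_x = 1`, `R_y = 1`.  (The superfluous generators `FreeGroup.of n` with
`n ≥ c+2` are killed, so that the effective generators are exactly
`x, y, t₃, s₂, …, s_c`.) -/
def rels (c : ℕ) (Rx Ry : FreeGroup ℕ) : Set (FreeGroup ℕ) :=
  {sw 2 * (fcomm yw xw)⁻¹, t3w * (fcomm (sw 2) yw)⁻¹, t3w ^ 3,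
    sw (c - 2) ^ 3 * (sw c ^ 2)⁻¹, Rx, Ry} ∪
  {w | ∃ j : ℕ, 3 ≤ j ∧ j ≤ c ∧ w = sw j * (fcomm (sw (j - 1)) xw)⁻¹} ∪
  {w | ∃ j : ℕ, 2 ≤ j ∧ j ≤ c - 3 ∧ w = sw j ^ 3 * (sw (j + 2) ^ 2 * sw (j + 3))⁻¹} ∪
  {w | ∃ n : ℕ, c + 2 ≤ n ∧ w = FreeGroup.of n}

/-- The group `G_Q(c, R_x, R_y)`. -/
abbrev GQ (c : ℕ) (Rx Ry : FreeGroup ℕ) : Type := PresentedGroup (rels c Rx Ry)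

/-- The two admissible relator words `R_x ∈ {x³, x³·s_c⁻¹}`. -/
def RxSet (c : ℕ) : Set (FreeGroup ℕ) := {xw ^ 3, xw ^ 3 * (sw c)⁻¹}

/-- The three admissible relator words
`R_y ∈ {y³·s₃⁻²·s₄⁻¹, y³·s₃⁻²·s₄⁻¹·s_c⁻¹, y³·s₃⁻²·s₄⁻¹·s_c⁻²}`. -/
def RySet (c : ℕ) : Set (FreeGroup ℕ) :=
  {yw ^ 3 * (sw 3 ^ 2)⁻¹ * (sw 4)⁻¹,
   yw ^ 3 * (sw 3 ^ 2)⁻¹ * (sw 4)⁻¹ * (sw c)⁻¹,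
   yw ^ 3 * (sw 3 ^ 2)⁻¹ * (sw 4)⁻¹ * (sw c ^ 2)⁻¹}

end GQdef

open GQdef

namespace GQdef

/-- The relator word `R_y = y³·s₃⁻²·s₄⁻¹`. -/
def Ry0 : FreeGroup ℕ := yw ^ 3 * (sw 3 ^ 2)⁻¹ * (sw 4)⁻¹

/-- The relator word `R_y = y³·s₃⁻²·s₄⁻¹·s_c⁻¹`. -/
def Ry1 (c : ℕ) : FreeGroup ℕ := yw ^ 3 * (sw 3 ^ 2)⁻¹ * (sw 4)⁻¹ * (sw c)⁻¹

/-- The relator word `R_y = y³·s₃⁻²·s₄⁻¹·s_c⁻²`. -/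
def Ry2 (c : ℕ) : FreeGroup ℕ := yw ^ 3 * (sw 3 ^ 2)⁻¹ * (sw 4)⁻¹ * (sw c ^ 2)⁻¹

end GQdef

/-!
Write `R_x = x³ s_c⁻ˡ` and `R_y = y³ s₃⁻² s₄⁻¹ s_c⁻ᵏ`.

Isomorphism: in `G_Q` the elements `s_2, …, s_c` commute pairwise and `s_c³ = 1`. Commutation
spreads downwards from the last elements of the sequence; conjugation by `x` is an automorphism
whose cube is trivial for `l = 0` and conjugation by `s_c` for `l = 1`, which settles the start.
Replacing the generator `x` by `x⁻¹` then changes `s_c` to `s_c⁻¹` when `c` is even, and the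
relations of the parameters `(l, k)` become those of `(l, -k)`.

Non-isomorphism: let `c = 2m + 2`. The group `G_Q` maps to the wreath product of `ℤ/3ᵐ⁺¹` by `ℤ/3`,
the image of `y` lying in the base group, and to that of `ℤ/3` by `ℤ/3`, the image of `x` lying in
the base group. On the joint image the total of a base function, and its slope modulo `3`, are
linear functions of the exponents of `x` and `y`. Given generators which satisfy the relations for
`(l, k)` inside the group of the parameters `(l', k')`, computing both invariants shows that `l'`
and `k'` are nonzero multiples of `l` and `k` modulo `3`.
-/

section Conjugation

variable {G H : Type*} [Group G] [Group H]

theorem map_fcomm (f : G →* H) (a b : G) : f (fcomm a b) = fcomm (f a) (f b) := by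
  simp [fcomm]

theorem mul_mul_fcomm (a b : G) : b * a * fcomm a b = a * b := by
  simp [fcomm, mul_assoc]

theorem commute_fcomm {a b g : G} (ha : Commute a g) (hb : Commute b g) :
    Commute (fcomm a b) g :=
  ((ha.inv_left.mul_left hb.inv_left).mul_left ha).mul_left hb

/-- Conjugation `g ↦ x⁻¹ g x` by a fixed element, on the side matching `fcomm`. -/
def conjHom (x : G) : G →* G := (MulAut.conj x⁻¹).toMonoidHom

theorem conjHom_apply (x g : G) : conjHom x g = x⁻¹ * g * x := by
  simp [conjHom]

theorem conjHom_eq_mul_fcomm (x g : G) : conjHom x g = g * fcomm g x := by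
  simp [conjHom_apply, fcomm, mul_assoc]

theorem mul_conjHom (x g : G) : x * conjHom x g = g * x := by
  simp [conjHom_apply, mul_assoc]

theorem conjHom_injective (x : G) : Function.Injective (conjHom x) :=
  (MulAut.conj x⁻¹).injective

theorem conjHom_inv_conjHom (x g : G) : conjHom x⁻¹ (conjHom x g) = g := by
  simp [conjHom_apply, mul_assoc]

theorem conjHom_of_commute {x g : G} (h : Commute g x) : conjHom x g = g := by
  rw [conjHom_apply, mul_assoc, h.eq, inv_mul_cancel_left]

theorem commute_of_conjHom_eq {x g : G} (h : conjHom x g = g) : Commute g x := by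
  have := mul_conjHom x g
  rw [h] at this
  exact this.symm

theorem conjHom_iterate_three (x g : G) :
    conjHom x (conjHom x (conjHom x g)) = conjHom (x ^ 3) g := by
  simp [conjHom_apply, pow_succ, mul_assoc]

theorem mul_pow_three_eq (x g : G) :
    (x * g) ^ 3 = x ^ 3 * (conjHom x (conjHom x g) * conjHom x g * g) := by
  simp [conjHom_apply, pow_succ, mul_assoc]

/-- With `B = p⁻¹bp` and `C = p⁻¹Bp`, the two hypotheses on cubes read `CB = b²` and
`C²B² = b⁴`; hence `C` and `B` commute, and so do all conjugates of `b` by powers of `p`. -/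
theorem fcomm_central_of_mul_pow_three {p b : G} (h₁ : (p * b) ^ 3 = p ^ 3 * b ^ 3)
    (h₂ : (p * b ^ 2) ^ 3 = p ^ 3 * b ^ 6) (hb : Commute b (p ^ 3)) :
    Commute (fcomm b p) b ∧ Commute (fcomm b p) p ∧ fcomm b p ^ 3 = 1 := by
  rw [mul_pow_three_eq, mul_right_inj, pow_succ b 2, mul_left_inj] at h₁
  rw [mul_pow_three_eq, mul_right_inj, pow_add b 4 2, mul_left_inj, map_pow, map_pow] at h₂
  have hC : conjHom p (conjHom p (conjHom p b)) = b := by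
    rw [conjHom_iterate_three, conjHom_of_commute hb]
  have hm : b * fcomm b p = conjHom p b := (conjHom_eq_mul_fcomm p b).symm
  have hφm : conjHom p (fcomm b p) = (conjHom p b)⁻¹ * conjHom p (conjHom p b) := by
    rw [← hm, map_mul, hm, inv_mul_cancel_left]
  generalize fcomm b p = m at *
  generalize hB : conjHom p b = B at *
  have hCB : Commute (conjHom p B) B := by
    have h : conjHom p B * (conjHom p B * B) * B = conjHom p B * (B * conjHom p B) * B := by
      calc _ = conjHom p B ^ 2 * B ^ 2 := by simp only [pow_two, mul_assoc]
        _ = (conjHom p B * B) ^ 2 := by rw [h₂, h₁, ← pow_mul]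
        _ = _ := by simp only [pow_two, mul_assoc]
    exact mul_left_cancel (mul_right_cancel h)
  have hbC : Commute b (conjHom p B) := by simpa only [hC] using hCB.map (conjHom p)
  have hbB : Commute b B := by
    rw [← mul_right_inj (conjHom p B)⁻¹, inv_mul_cancel_left] at h₁
    exact h₁ ▸ hbC.inv_right.mul_right ((Commute.refl b).pow_right 2)
  have hC' : conjHom p B = b ^ 2 * B⁻¹ := eq_mul_inv_of_mul_eq h₁
  have hB₃ : b ^ 3 = B ^ 3 := by
    have h := congrArg (conjHom p) h₁
    rw [map_mul, hC, map_pow, hB, hC', ← mul_assoc, mul_inv_eq_iff_eq_mul] at h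
    rw [pow_succ B, ← h, pow_succ']
  obtain rfl : m = b⁻¹ * B := by rw [← hm, inv_mul_cancel_left]
  have hm₃ : (b⁻¹ * B) ^ 3 = 1 := by
    rw [hbB.inv_left.mul_pow, inv_pow, hB₃, inv_mul_cancel]
  refine ⟨(Commute.refl b).inv_left.mul_left hbB.symm, commute_of_conjHom_eq ?_, hm₃⟩
  rw [hφm, hC']
  rw [inv_mul_eq_iff_eq_mul, mul_inv_eq_iff_eq_mul]
  calc b ^ 2 = b⁻¹ * b ^ 3 := by rw [pow_succ' b 2, inv_mul_cancel_left]
    _ = b⁻¹ * (B * B * B) := by rw [hB₃, pow_succ, pow_two]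
    _ = B * (b⁻¹ * B) * B := by simp only [mul_assoc, hbB.inv_left.left_comm]

/-- Applying `φ` to `(pb)³ = p³b³` yields `(pb²)³ = p³b⁶`, so that `[b,p]` is central in `⟨b, p⟩`;
then `φ [b,p] = [bv, pb] = b⁻¹[b,p]b = [b,p]`. -/
theorem fcomm_central_of_shift {φ : G →* G} {p b v : G} (hp : φ p = p * b) (hb : φ b = b * v)
    (hpv : Commute p v) (hbv : Commute b v) (hcube : φ (p ^ 3) = p ^ 3 * b ^ 3)
    (hbp : Commute b (p ^ 3)) :
    Commute (fcomm b p) b ∧ Commute (fcomm b p) p ∧ fcomm b p ^ 3 = 1 ∧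
      φ (fcomm b p) = fcomm b p := by
  have h₁ : (p * b) ^ 3 = p ^ 3 * b ^ 3 := by rw [← hp, ← map_pow, hcube]
  have h₂ : (p * b ^ 2) ^ 3 = p ^ 3 * b ^ 6 := by
    have h := congrArg φ h₁
    rw [map_pow, map_mul, map_mul, hcube, map_pow, hp, hb, hbv.mul_pow, ← mul_assoc, ← mul_assoc,
      mul_assoc p, ← pow_two, (hpv.mul_left (hbv.pow_left 2)).mul_pow, mul_right_cancel_iff,
      mul_assoc, ← pow_add] at h
    exact h
  obtain ⟨hmb, hmp, hm₃⟩ := fcomm_central_of_mul_pow_three h₁ h₂ hbp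
  refine ⟨hmb, hmp, hm₃, ?_⟩
  calc φ (fcomm b p) = fcomm (b * v) (p * b) := by rw [map_fcomm, hb, hp]
    _ = v⁻¹ * (b⁻¹ * fcomm b p * b) * v := by
      simp only [fcomm, mul_inv_rev, mul_assoc, (hpv.symm.mul_right hbv.symm).eq]
    _ = v⁻¹ * fcomm b p * v := by rw [mul_assoc b⁻¹, hmb.eq, inv_mul_cancel_left]
    _ = fcomm b p := by rw [mul_assoc, (commute_fcomm hbv hpv).eq, inv_mul_cancel_left]

end Conjugation

/-! ### Commutation among the `s_j` -/

section Commute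

variable {G : Type*} [Group G] {φ : G →* G} {q p β E D m : G}

theorem commute_of_commute_of_map (hq : φ q = q * p) (hβ : φ β = β * E) (hqβ : Commute q β)
    (hpβ : Commute p β) (hpE : Commute p E) : Commute q E := by
  have h := hqβ.map φ
  rw [hq, hβ] at h
  have hE : Commute (q * p) E := by
    simpa only [inv_mul_cancel_left] using (hqβ.mul_left hpβ).inv_right.mul_right h
  simpa only [mul_inv_cancel_right] using hE.mul_left hpE.inv_left

/-- Applying `φ` to `qβ = βq` gives `Eq = qEm`, and applying it once more gives `Dq = qD`. -/
theorem commute_of_commute_of_map_of_eq_mul (hq : φ q = q * p) (hβ : φ β = β * E)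
    (hE : φ E = E * D) (hm : φ m = m) (hqβ : Commute q β) (hpβ : p * β = β * p * m)
    (hpm : Commute p m) (hEm : Commute E m) (hDm : Commute D m) (hpE : Commute p E)
    (hpD : Commute p D) : Commute q D := by
  have hEq : E * q = q * (E * m) := by
    have h := congrArg φ hqβ.eq
    rw [map_mul, map_mul, hq, hβ] at h
    rw [← mul_right_inj β, ← mul_left_inj p]
    calc β * (E * q) * p = q * p * (β * E) := by rw [h]; simp only [mul_assoc]
      _ = q * (p * β) * E := by simp only [mul_assoc]
      _ = q * β * (p * m * E) := by rw [hpβ]; simp only [mul_assoc]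
      _ = β * q * (E * m * p) := by rw [hqβ.eq, (hpE.mul_left hEm.symm).eq, hpm.eq, mul_assoc E]
      _ = β * (q * (E * m)) * p := by simp only [mul_assoc]
  have h := congrArg φ hEq
  rw [map_mul, map_mul φ q, map_mul φ E, hE, hq, hm] at h
  refine Eq.symm ?_
  rw [← mul_right_inj E, ← mul_left_inj p]
  calc E * (D * q) * p = q * p * (E * D * m) := by rw [← h]; simp only [mul_assoc]
    _ = q * (E * D * m) * p := by
      rw [mul_assoc, ((hpE.mul_right hpD).mul_right hpm).eq, mul_assoc q]
    _ = q * (E * m) * D * p := by rw [mul_assoc E, hDm.eq]; simp only [mul_assoc]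
    _ = E * (q * D) * p := by rw [← hEq, mul_assoc E]

theorem mul_sq_eq_of_fcomm {b p : G} (hm : Commute (fcomm b p) b) (hm₃ : fcomm b p ^ 3 = 1) :
    p * b ^ 2 = b ^ 2 * p * fcomm b p := by
  have hb : p * b * fcomm b p = b * p := mul_mul_fcomm b p
  calc p * b ^ 2 = p * b ^ 2 * fcomm b p ^ 3 := by rw [hm₃, mul_one]
    _ = p * b * fcomm b p * b * fcomm b p * fcomm b p := by
      simp only [pow_succ, pow_zero, one_mul, mul_assoc, hm.left_comm]
    _ = b * (p * b * fcomm b p) * fcomm b p := by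
      nth_rw 1 [hb]; simp only [mul_assoc]
    _ = b ^ 2 * p * fcomm b p := by rw [hb, pow_two]; simp only [mul_assoc]

end Commute

/-- The elements `s_i, s_{i+1}, …` commute pairwise. -/
def CommutesFrom {G : Type*} [Mul G] (s : ℕ → G) (i : ℕ) : Prop :=
  ∀ ⦃j k : ℕ⦄, i ≤ j → i ≤ k → Commute (s j) (s k)

theorem CommutesFrom.pow_mul_mul_sq {G : Type*} [Group G] {s : ℕ → G} {c k : ℕ}
    (hs : CommutesFrom s 3) (hc : 3 ≤ c) : s c ^ k * s 4 * s 3 ^ 2 = s 3 ^ 2 * s 4 * s c ^ k := by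
  have h₃ := (hs (j := 3) le_rfl (show 3 ≤ 4 by omega)).pow_left 2
  rw [mul_assoc, ← h₃.eq]
  exact (((hs hc le_rfl).pow_right 2).mul_right (hs hc (by omega))).pow_left k

/-- The relations among `s_2, …, s_c` in `G_Q`, with the shift `s_j ↦ s_j s_{j+1}` performed by an
arbitrary endomorphism `φ`. The sequence is prolonged by `s_j = 1` for `j > c`, so that the cube
relation holds for all `j ≥ 2`. -/
structure Tail {G : Type*} [Group G] (φ : G →* G) (s : ℕ → G) (c : ℕ) : Prop where
  shift : ∀ j, 2 ≤ j → φ (s j) = s j * s (j + 1)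
  cube : ∀ j, 2 ≤ j → s j ^ 3 = s (j + 2) ^ 2 * s (j + 3)
  eq_one : ∀ j, c < j → s j = 1

namespace Tail

variable {G : Type*} [Group G] {φ : G →* G} {s : ℕ → G} {c i j k : ℕ} {g h q : G}

theorem map_last (T : Tail φ s c) (hc : 2 ≤ c) : φ (s c) = s c := by
  rw [T.shift c hc, T.eq_one (c + 1) c.lt_succ_self, mul_one]

theorem norm_eq_one {i : ℕ} (T : Tail φ s c) (hi : 2 ≤ i) (hs : CommutesFrom s (i + 2)) :
    s i ^ 3 * s (i + 1) ^ 3 * s (i + 2) = 1 := by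
  by_cases hic : c < i
  · simp only [T.eq_one i hic, T.eq_one (i + 1) (by omega), T.eq_one (i + 2) (by omega), one_pow,
      mul_one]
  · have h₃ : Commute (s (i + 2)) (s (i + 3)) := hs (by omega) (by omega)
    have h₄ : Commute (s (i + 2)) (s (i + 4)) := hs (by omega) (by omega)
    calc s i ^ 3 * s (i + 1) ^ 3 * s (i + 2)
        = s (i + 2) ^ 3 * s (i + 3) ^ 3 * s (i + 4) := by
          rw [T.cube i hi, T.cube (i + 1) (by omega)]
          simp only [pow_succ, pow_zero, one_mul, mul_assoc, h₃.symm.left_comm, h₄.symm.eq]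
      _ = 1 := T.norm_eq_one (i := i + 2) (by omega) fun j k hj hk => hs (by omega) (by omega)
termination_by c + 1 - i

theorem map_sq_mul (T : Tail φ s c) (hi : 2 ≤ i) (hs : Commute (s i) (s (i + 1))) :
    φ (s i ^ 2 * s (i + 1)) = (s i ^ 2 * s (i + 1)) * (s (i + 1) ^ 2 * s (i + 2)) := by
  simp only [map_mul, T.shift i hi, T.shift (i + 1) (by omega), pow_two, mul_assoc,
    hs.symm.left_comm]

theorem map_cube (T : Tail φ s c) (hi : 2 ≤ i) (hs : Commute (s (i + 2)) (s (i + 3))) :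
    φ (s i ^ 3) = s i ^ 3 * s (i + 1) ^ 3 := by
  rw [T.cube i hi, T.map_sq_mul (by omega) hs, ← T.cube (i + 1) (by omega)]

theorem commute_of_commute_sq_mul {i : ℕ} (T : Tail φ s c) (hi : 2 ≤ i)
    (hg : ∀ k, i ≤ k → Commute g (s k ^ 2 * s (k + 1))) : Commute g (s i) := by
  by_cases hic : c < i
  · rw [T.eq_one i hic]
    exact Commute.one_right g
  · have h₁ : Commute g (s (i + 1)) :=
      T.commute_of_commute_sq_mul (by omega) fun k hk => hg k (by omega)
    have h₂ : Commute g (s i ^ 2) := by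
      simpa only [mul_inv_cancel_right] using (hg i le_rfl).mul_right h₁.inv_right
    have h₃ : Commute g (s i ^ 3) := T.cube i hi ▸ hg (i + 2) (by omega)
    simpa only [pow_succ (s i) 2, inv_mul_cancel_left] using h₂.inv_right.mul_right h₃
termination_by c + 1 - i

theorem commute_of_commute_of_map (T : Tail φ s c) (hi : 2 ≤ i) (hs : CommutesFrom s i)
    (hg : φ g = g * h) (hh : ∀ k, i ≤ k → Commute h (s k))
    (hgi : Commute g (s i ^ 2 * s (i + 1))) (hk : i ≤ k) : Commute g (s k) := by
  have hhD : ∀ n, i ≤ n → Commute h (s n ^ 2 * s (n + 1)) := fun n hn =>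
    ((hh n hn).pow_right 2).mul_right (hh (n + 1) (by omega))
  have hgD : ∀ n, i ≤ n → Commute g (s n ^ 2 * s (n + 1)) := fun n hn => by
    induction n, hn using Nat.le_induction with
    | base => exact hgi
    | succ n hn ih =>
      exact _root_.commute_of_commute_of_map hg
        (T.map_sq_mul (by omega) (hs hn (by omega))) ih (hhD n hn) (hhD (n + 1) (by omega))
  exact T.commute_of_commute_sq_mul (by omega) fun n hn => hgD n (hk.trans hn)

theorem commute_add_two (T : Tail φ s c) (hj : 2 ≤ j) (hs : CommutesFrom s (j + 1))
    (hi : j + 2 ≤ i) : Commute (s j) (s i) :=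
  T.commute_of_commute_of_map (by omega) (fun a b ha hb => hs (by omega) (by omega))
    (T.shift j hj) (fun a ha => hs le_rfl (by omega))
    (T.cube j hj ▸ (Commute.refl _).pow_right 3) hi

theorem fcomm_succ (T : Tail φ s c) (hj : 2 ≤ j) (hs : CommutesFrom s (j + 1)) :
    (∀ i, j ≤ i → Commute (fcomm (s (j + 1)) (s j)) (s i)) ∧
      fcomm (s (j + 1)) (s j) ^ 3 = 1 ∧ φ (fcomm (s (j + 1)) (s j)) = fcomm (s (j + 1)) (s j) := by
  have hb : ∀ i, j + 1 ≤ i → Commute (s (j + 1)) (s i) := fun i hi => hs le_rfl hi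
  obtain ⟨hmb, hmp, hm₃, hφm⟩ := fcomm_central_of_shift (T.shift j hj) (T.shift (j + 1) (by omega))
    (T.commute_add_two hj hs le_rfl) (hb _ (by omega))
    (T.map_cube hj (hs (by omega) (by omega)))
    (T.cube j hj ▸ ((hb _ (by omega)).pow_right 2).mul_right (hb _ (by omega)))
  refine ⟨fun i hi => ?_, hm₃, hφm⟩
  obtain rfl | rfl | hi : i = j ∨ i = j + 1 ∨ j + 2 ≤ i := by omega
  · exact hmp
  · exact hmb
  · exact commute_fcomm (hb i (by omega)) (T.commute_add_two hj hs hi)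

theorem map_pow_three (T : Tail φ s c) (hj : 2 ≤ j) (hjc : j + 2 ≤ c)
    (hs : CommutesFrom s (j + 1)) (hq₃ : q ^ 3 = s (j + 1) ^ 2 * s (j + 2) * s c ^ k) :
    φ (q ^ 3) = q ^ 3 * (s (j + 2) ^ 2 * s (j + 3)) := by
  have hE : Commute (s (j + 2) ^ 2 * s (j + 3)) (s c ^ k) :=
    (((hs (by omega) (by omega)).pow_left 2).mul_left (hs (by omega) (by omega))).pow_right k
  rw [hq₃, map_mul, map_pow φ (s c), T.map_last (by omega),
    T.map_sq_mul (by omega) (hs le_rfl (by omega)), mul_assoc, hE.eq, ← mul_assoc]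

theorem commute_add_three_of_pow_three_eq (T : Tail φ s c) (hj : 2 ≤ j) (hjc : j + 2 ≤ c)
    (hs : CommutesFrom s (j + 1)) (hq : φ q = q * s j)
    (hq₃ : q ^ 3 = s (j + 1) ^ 2 * s (j + 2) * s c ^ k) (hi : j + 3 ≤ i) : Commute q (s i) := by
  obtain ⟨hm, hm₃, hφm⟩ := T.fcomm_succ hj hs
  have hp : ∀ i, j + 2 ≤ i → Commute (s j) (s i) := fun i => T.commute_add_two hj hs
  have hpβ : s j * q ^ 3 = q ^ 3 * s j * fcomm (s (j + 1)) (s j) := by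
    have hv : Commute (s j * fcomm (s (j + 1)) (s j)) (s (j + 2) * s c ^ k) :=
      ((hp _ le_rfl).mul_left (hm _ (by omega))).mul_right
        (((hp _ hjc).mul_left (hm _ (by omega))).pow_right k)
    calc s j * q ^ 3 = s j * s (j + 1) ^ 2 * (s (j + 2) * s c ^ k) := by
          rw [hq₃]; simp only [mul_assoc]
      _ = s (j + 1) ^ 2 * (s j * fcomm (s (j + 1)) (s j) * (s (j + 2) * s c ^ k)) := by
          rw [mul_sq_eq_of_fcomm (hm _ (by omega)) hm₃]; simp only [mul_assoc]
      _ = q ^ 3 * s j * fcomm (s (j + 1)) (s j) := by rw [hv.eq, hq₃]; simp only [mul_assoc]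
  refine T.commute_of_commute_of_map (by omega) (fun a b ha hb => hs (by omega) (by omega)) hq
    (fun i hi => hp i (by omega)) ?_ hi
  have hD := T.map_sq_mul (i := j + 2) (by omega) (hs (by omega) (by omega))
  exact commute_of_commute_of_map_of_eq_mul hq (T.map_pow_three hj hjc hs hq₃) hD hφm
    ((Commute.refl q).pow_right 3) hpβ (hm j le_rfl).symm
    (((hm (j + 2) (by omega)).pow_right 2).mul_right (hm _ (by omega))).symm
    (((hm (j + 3) (by omega)).pow_right 2).mul_right (hm _ (by omega))).symm
    (((hp (j + 2) (by omega)).pow_right 2).mul_right (hp _ (by omega)))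
    (((hp (j + 3) (by omega)).pow_right 2).mul_right (hp _ (by omega)))

theorem commutesFrom_of_pow_three_eq (T : Tail φ s c) (hφ : ∀ g, Commute g (s c) → φ (φ (φ g)) = g)
    (hj : 2 ≤ j) (hjc : j + 3 ≤ c) (hs : CommutesFrom s (j + 1)) (hq : φ q = q * s j)
    (hq₃ : q ^ 3 = s (j + 1) ^ 2 * s (j + 2) * s c ^ k) : CommutesFrom s j := by
  have hp : ∀ i, j + 2 ≤ i → Commute (s j) (s i) := fun i => T.commute_add_two hj hs
  obtain ⟨hm, -, -⟩ := T.fcomm_succ hj hs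
  have hb := mul_mul_fcomm (s (j + 1)) (s j)
  have hm₁ : fcomm (s (j + 1)) (s j) = 1 := by
    have hqc := hφ q (T.commute_add_three_of_pow_three_eq hj (by omega) hs hq hq₃ hjc)
    have hN := T.norm_eq_one hj fun a b ha hb => hs (by omega) (by omega)
    rw [hq, map_mul, hq, T.shift j hj, map_mul, map_mul, map_mul, T.shift j hj,
      T.shift (j + 1) (by omega), hq] at hqc
    have hmb := hm (j + 1) (by omega)
    have hmv := hm (j + 2) (by omega)
    generalize fcomm (s (j + 1)) (s j) = m at *
    have hbX : ∀ X, s (j + 1) * (s j * X) = s j * (s (j + 1) * (m * X)) := fun X => by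
      rw [← mul_assoc, ← hb]; simp only [mul_assoc]
    simp only [mul_assoc, mul_eq_left, hbX] at hqc
    calc m = s j ^ 3 * s (j + 1) ^ 3 * s (j + 2) * m := by rw [hN, one_mul]
      _ = 1 := by
        rw [← hqc]
        simp only [pow_succ, pow_zero, one_mul, mul_assoc, hmb.left_comm, hmv.eq]
  have hpb : Commute (s j) (s (j + 1)) := by
    rwa [hm₁, mul_one] at hb
  have hp' : ∀ i, j ≤ i → Commute (s j) (s i) := fun i hi => by
    obtain rfl | rfl | hi : i = j ∨ i = j + 1 ∨ j + 2 ≤ i := by omega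
    exacts [Commute.refl _, hpb, hp i hi]
  intro a b ha hb
  obtain rfl | ha := ha.eq_or_lt
  · exact hp' b hb
  · obtain rfl | hb := hb.eq_or_lt
    · exact (hp' a ha.le).symm
    · exact hs ha hb

theorem commutesFrom_two (T : Tail φ s c) (hφ : ∀ g, Commute g (s c) → φ (φ (φ g)) = g)
    (hc : 5 ≤ c) (hs : CommutesFrom s (c - 2)) (hq : φ q = q * s 2)
    (hq₃ : q ^ 3 = s c ^ k * s 4 * s 3 ^ 2) : CommutesFrom s 2 := by
  refine Nat.decreasingInduction' (P := CommutesFrom s) (fun j hj hj₂ hsj => ?_) (by omega) hs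
  obtain rfl | hj₂ := hj₂.eq_or_lt
  · exact T.commutesFrom_of_pow_three_eq hφ le_rfl (by omega) hsj hq
      (hq₃.trans (hsj.pow_mul_mul_sq (by omega)))
  · obtain ⟨j, rfl⟩ : ∃ i, j = i + 1 := ⟨j - 1, by omega⟩
    exact T.commutesFrom_of_pow_three_eq (k := 0) hφ (by omega) (by omega) hsj
      (T.shift j (by omega)) (by rw [pow_zero, mul_one, T.cube j (by omega)])

theorem commute_of_pow_three_eq (T : Tail φ s c) (hc : 4 ≤ c) (hs : CommutesFrom s 2)
    (hq : φ q = q * s 2) (hq₃ : q ^ 3 = s 3 ^ 2 * s 4 * s c ^ k) (hi : 3 ≤ i) :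
    Commute q (s i) := by
  have h₂ : ∀ i, 2 ≤ i → Commute (s 2) (s i) := fun i hi => hs le_rfl hi
  have hβ := T.map_pow_three le_rfl hc (fun a b ha hb => hs (by omega) (by omega)) hq₃
  have hqβ : Commute q (q ^ 3) := (Commute.refl q).pow_right 3
  rw [hq₃] at hβ hqβ
  have h₄ : ∀ i, 4 ≤ i → Commute q (s i) := fun i => T.commute_of_commute_of_map (by omega)
    (fun a b ha hb => hs (by omega) (by omega)) hq (fun i hi => h₂ i (by omega))
    (_root_.commute_of_commute_of_map hq hβ hqβ
      ((((h₂ 3 (by omega)).pow_right 2).mul_right (h₂ 4 (by omega))).mul_right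
        ((h₂ c (by omega)).pow_right k))
      (((h₂ 4 (by omega)).pow_right 2).mul_right (h₂ 5 (by omega))))
  obtain rfl | hi := hi.eq_or_lt
  · have hsq : Commute q (s 3 ^ 2) := by
      simpa only [mul_inv_cancel_right] using
        (hqβ.mul_right ((h₄ c hc).pow_right k).inv_right).mul_right (h₄ 4 le_rfl).inv_right
    have hcube : Commute q (s 3 ^ 3) :=
      T.cube 3 (by omega) ▸ ((h₄ 5 (by omega)).pow_right 2).mul_right (h₄ 6 (by omega))
    simpa only [pow_succ (s 3) 2, inv_mul_cancel_left] using hsq.inv_right.mul_right hcube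
  · exact h₄ i hi

theorem fcomm_commute_two (T : Tail φ s c) (hc : 4 ≤ c) (hs : CommutesFrom s 2)
    (hq : φ q = q * s 2) (hq₃ : q ^ 3 = s 3 ^ 2 * s 4 * s c ^ k) :
    Commute (fcomm (s 2) q) (s 2) := by
  have h₂ : ∀ i, 2 ≤ i → Commute (s 2) (s i) := fun i hi => hs le_rfl hi
  have hcube := T.map_pow_three le_rfl hc (fun a b ha hb => hs (by omega) (by omega)) hq₃
  rw [← T.cube 2 le_rfl] at hcube
  exact (fcomm_central_of_shift hq (T.shift 2 le_rfl)
    (T.commute_of_pow_three_eq hc hs hq hq₃ le_rfl) (h₂ 3 (by omega)) hcube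
    (hq₃ ▸ (((h₂ 3 (by omega)).pow_right 2).mul_right (h₂ 4 (by omega))).mul_right
        ((h₂ c (by omega)).pow_right k))).1

end Tail

/-! ### The last five elements -/

/-- The relations of `G_Q` among five consecutive elements `q, w, u, v, z` of which `z = s_c` is the
last one; here neither `φ z = z` nor anything about `v³` and `z³` is assumed. -/
structure TopTail {G : Type*} [Group G] (φ : G →* G) (q w u v z : G) : Prop where
  map_q : φ q = q * w
  map_w : φ w = w * u
  map_u : φ u = u * v
  map_v : φ v = v * z
  cube_w : w ^ 3 = v ^ 2 * z
  cube_u : u ^ 3 = z ^ 2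

namespace TopTail

variable {G : Type*} [Group G] {φ : G →* G} {q w u v z : G}

theorem map_map_w (T : TopTail φ q w u v z) (hφ : φ (φ (φ q)) = q) : φ (φ w) = (w * φ w)⁻¹ := by
  rw [T.map_q, map_mul, T.map_q, map_mul, map_mul, T.map_q, mul_assoc, mul_assoc, mul_eq_left] at hφ
  exact (inv_eq_of_mul_eq_one_right (by rw [mul_assoc, hφ])).symm

/-- In terms of `b = φ w`, with `φ b = (wb)⁻¹`, the relation `w³ = v²z` becomes `w² = b⁻¹w²b`;
the other relations follow by applying `φ`. -/
theorem commute_sq_map_w (T : TopTail φ q w u v z) (hφ : φ (φ (φ q)) = q) :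
    Commute (w ^ 2) (φ w) ∧ Commute (φ w ^ 2) w ∧ Commute ((w * φ w) ^ 2) (φ w) ∧
      v = (φ w ^ 3)⁻¹ := by
  have hb := T.map_map_w hφ
  obtain ⟨b, ha⟩ : ∃ b, φ w = b := ⟨_, rfl⟩
  rw [ha] at hb ⊢
  have hu : u = w⁻¹ * b := by rw [← ha, T.map_w, inv_mul_cancel_left]
  have hv : v = b⁻¹ * w * (b⁻¹ * (w * b)⁻¹) := by
    rw [← inv_mul_cancel_left u v, ← T.map_u, hu, map_mul, map_inv, ha, hb, mul_inv_rev, inv_inv]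
  have hwb : Commute (w ^ 2) b := by
    have h : w ^ 3 = b⁻¹ * w ^ 2 * b * w := by
      rw [T.cube_w, pow_two v, mul_assoc v v z, ← T.map_v, hv]
      simp only [map_mul, map_inv, ha, hb, pow_two, mul_inv_rev, inv_inv, mul_assoc,
        inv_mul_cancel_left, mul_inv_cancel, mul_one]
    rw [pow_succ w 2, mul_left_inj, mul_assoc, eq_inv_mul_iff_mul_eq] at h
    exact h.symm
  have hbw : Commute (b ^ 2) w := by
    have h := hwb.map φ
    rw [map_pow, ha, hb, Commute.inv_right_iff] at h
    simpa only [mul_inv_cancel_right] using h.mul_right ((Commute.refl b).pow_left 2).inv_right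
  have hwbb : Commute ((w * b) ^ 2) b := by
    have h := hbw.map φ
    rwa [map_pow, ha, hb, inv_pow, Commute.inv_left_iff] at h
  refine ⟨hwb, hbw, hwbb, ?_⟩
  calc v = b⁻¹ * (w * (b ^ 2)⁻¹ * w⁻¹) := by
        rw [hv]; simp only [pow_two, mul_inv_rev, mul_assoc]
    _ = (b ^ 3)⁻¹ := by
        rw [← hbw.inv_left.eq, mul_inv_cancel_right, ← mul_inv_rev, ← pow_succ]

/-- With `b = φ w`, both `u² = w⁻⁴(wb)²` and `u³ = z² = b⁷w²b(wb)⁴` commute with `b`. -/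
theorem commute_w_map_w (T : TopTail φ q w u v z) (hφ : φ (φ (φ q)) = q) : Commute w (φ w) := by
  obtain ⟨hwb, hbw, hwbb, hv⟩ := T.commute_sq_map_w hφ
  have hb := T.map_map_w hφ
  obtain ⟨b, ha⟩ : ∃ b, φ w = b := ⟨_, rfl⟩
  rw [ha] at hb hwb hbw hwbb hv ⊢
  have hu : u = w⁻¹ * b := by rw [← ha, T.map_w, inv_mul_cancel_left]
  have hwbw : Commute ((w * b) ^ 2) w := by
    simpa only [mul_inv_cancel_right] using
      ((Commute.refl (w * b)).pow_left 2).mul_right hwbb.inv_right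
  have hz : z = b ^ 3 * (w * b) * (w * b) ^ 2 := by
    rw [← inv_mul_cancel_left v z, ← T.map_v, hv, inv_inv, map_inv, map_pow, hb, inv_pow, inv_inv,
      pow_succ' (w * b) 2, ← mul_assoc]
  have hz₂ : z ^ 2 = b ^ 3 * (b ^ 2) ^ 2 * w ^ 2 * b * ((w * b) ^ 2) ^ 2 := by
    calc z ^ 2 = (b ^ 3 * (w * b)) ^ 2 * ((w * b) ^ 2) ^ 2 := by
          rw [hz, ((hwbb.pow_right 3).mul_right (hwbw.mul_right hwbb)).symm.mul_pow]
      _ = b ^ 3 * (w * (b ^ 2) ^ 2) * w * b * ((w * b) ^ 2) ^ 2 := by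
          simp only [pow_succ, pow_zero, one_mul, mul_assoc]
      _ = _ := by rw [← (hbw.pow_left 2).eq]; simp only [pow_two w, mul_assoc]
  have hu₂ : u ^ 2 = (w ^ 2 * w ^ 2)⁻¹ * (w * b) ^ 2 := by
    rw [eq_inv_mul_iff_mul_eq, hu]
    calc w ^ 2 * w ^ 2 * (w⁻¹ * b) ^ 2 = w * (w ^ 2 * b) * (w⁻¹ * b) := by
          simp only [pow_two, mul_assoc, mul_inv_cancel_left]
      _ = (w * b) ^ 2 := by
          rw [hwb.eq]; simp only [pow_two, mul_assoc, mul_inv_cancel_left]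
  have hu₂b : Commute (u ^ 2) b := hu₂ ▸ (hwb.mul_left hwb).inv_left.mul_left hwbb
  have hu₃b : Commute (u ^ 3) b := by
    have hbb := Commute.refl b
    rw [T.cube_u, hz₂]
    exact ((((hbb.pow_left 3).mul_left ((hbb.pow_left 2).pow_left 2)).mul_left hwb).mul_left
      hbb).mul_left (hwbb.pow_left 2)
  have hub : Commute u b := by
    simpa only [pow_succ u 2, inv_mul_cancel_left] using hu₂b.inv_left.mul_left hu₃b
  have hwu : w = b * u⁻¹ := by rw [hu, mul_inv_rev, inv_inv, mul_inv_cancel_left]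
  exact hwu ▸ (Commute.refl b).mul_left hub.inv_left

theorem pow_three_eq_one_of_commute (T : TopTail φ q w u v z) (hwu : Commute w u)
    (huv : Commute u v) (hvz : Commute v z) : φ z = z ∧ z ^ 3 = 1 ∧ v ^ 3 = 1 := by
  have hz : φ z = z := by
    have h := congrArg φ T.cube_w
    rw [map_pow, T.map_w, hwu.mul_pow, T.cube_w, T.cube_u, map_mul, map_pow, T.map_v, hvz.mul_pow,
      mul_assoc, mul_assoc, mul_right_inj, ← pow_succ', pow_succ, mul_right_inj] at h
    exact h.symm
  have hv₃ : v ^ 3 = 1 := by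
    have h := congrArg φ T.cube_u
    rwa [map_pow, T.map_u, huv.mul_pow, map_pow, hz, ← T.cube_u, mul_eq_left] at h
  have hz₃ : z ^ 3 = 1 := by
    have h := congrArg φ hv₃
    rwa [map_pow, T.map_v, hvz.mul_pow, hv₃, one_mul, map_one] at h
  exact ⟨hz, hz₃, hv₃⟩

theorem of_map_map_map_eq (T : TopTail φ q w u v z) (hφ : φ (φ (φ q)) = q) :
    φ z = z ∧ z ^ 3 = 1 ∧ v ^ 3 = 1 ∧ Commute u v ∧ Commute u z ∧ Commute v z := by
  have hwb := T.commute_w_map_w hφ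
  have hb := T.map_map_w hφ
  obtain ⟨b, ha⟩ : ∃ b, φ w = b := ⟨_, rfl⟩
  rw [ha] at hwb hb
  have hu : u = w⁻¹ * b := by rw [← ha, T.map_w, inv_mul_cancel_left]
  have hv : v = u⁻¹ * φ u := by rw [T.map_u, inv_mul_cancel_left]
  have hz : z = v⁻¹ * φ v := by rw [T.map_v, inv_mul_cancel_left]
  have hmap : ∀ {g}, Commute g w → Commute g b → Commute (φ g) w ∧ Commute (φ g) b :=
    fun {g} hgw hgb => by
      have h₁ := hgw.map φ
      have h₂ := hgb.map φ
      rw [ha] at h₁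
      rw [hb, Commute.inv_right_iff] at h₂
      exact ⟨by simpa only [mul_inv_cancel_right] using h₂.mul_right h₁.inv_right, h₁⟩
  have huw : Commute u w := hu ▸ (Commute.refl w).inv_left.mul_left hwb.symm
  have hub : Commute u b := hu ▸ hwb.inv_left.mul_left (Commute.refl b)
  have hvw : Commute v w := hv ▸ huw.inv_left.mul_left (hmap huw hub).1
  have hvb : Commute v b := hv ▸ hub.inv_left.mul_left (hmap huw hub).2
  have hzw : Commute z w := hz ▸ hvw.inv_left.mul_left (hmap hvw hvb).1
  have hzb : Commute z b := hz ▸ hvb.inv_left.mul_left (hmap hvw hvb).2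
  have huv : Commute u v := hu ▸ (hvw.inv_right.mul_right hvb).symm
  have huz : Commute u z := hu ▸ (hzw.inv_right.mul_right hzb).symm
  have hvz : Commute v z := by
    have hφu : Commute (φ u) z := by
      rw [hu, map_mul, map_inv, ha, hb]
      exact hzb.symm.inv_left.mul_left (hzw.symm.mul_left hzb.symm).inv_left
    exact hv ▸ huz.inv_left.mul_left hφu
  obtain ⟨hφz, hz₃, hv₃⟩ := T.pow_three_eq_one_of_commute huw.symm huv hvz
  exact ⟨hφz, hz₃, hv₃, huv, huz, hvz⟩

end TopTail

/-- The relations of `TopTail` when `s_c = x³` and `φ` is conjugation by `x`: the last element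
`z` is fixed by `φ` and `φ³` is conjugation by `z`. -/
structure TwistedTopTail {G : Type*} [Group G] (φ : G →* G) (q w u v z : G) : Prop
    extends TopTail φ q w u v z where
  map_z : φ z = z
  map_map_map : ∀ g, φ (φ (φ g)) = conjHom z g

namespace TwistedTopTail

variable {G : Type*} [Group G] {φ : G →* G} {q w u v z : G}

theorem pow_three_eq_one (T : TwistedTopTail φ q w u v z) :
    z ^ 3 = 1 ∧ v ^ 3 = 1 ∧ Commute u z ∧ Commute v z := by
  have huz₂ : Commute u (z ^ 2) := T.cube_u ▸ (Commute.refl u).pow_right 3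
  have hvz₂ : Commute v (z ^ 2) := by
    have h := huz₂.map φ
    rw [T.map_u, map_pow, T.map_z] at h
    simpa only [inv_mul_cancel_left] using huz₂.inv_left.mul_left h
  have hz₃ : z ^ 3 = 1 := by
    have h := mul_conjHom z v
    rw [← T.map_map_map, T.map_v, map_mul, T.map_v, map_mul, map_mul, T.map_z, T.map_z,
      T.map_v] at h
    simp only [← mul_assoc, mul_left_inj] at h
    rwa [mul_assoc (z * v), ← pow_two, mul_assoc, hvz₂.eq, ← mul_assoc, ← pow_succ',
      mul_eq_right] at h
  have hzz : z = (z ^ 2) ^ 2 := by rw [← pow_mul, pow_succ, hz₃, one_mul]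
  have huz : Commute u z := hzz ▸ huz₂.pow_right 2
  have hvz : Commute v z := hzz ▸ hvz₂.pow_right 2
  have hv₃ : v ^ 3 = 1 := by
    have h := T.map_map_map u
    rw [conjHom_of_commute huz, T.map_u, map_mul, T.map_u, map_mul, map_mul, T.map_u, T.map_v,
      map_mul, T.map_v, T.map_z] at h
    simp only [mul_assoc, mul_eq_left, hvz.symm.left_comm] at h
    calc v ^ 3 = v ^ 3 * z ^ 3 := by rw [hz₃, mul_one]
      _ = 1 := by rw [← h]; simp only [pow_succ, pow_zero, one_mul, mul_assoc]
  exact ⟨hz₃, hv₃, huz, hvz⟩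

theorem fcomm_central (T : TwistedTopTail φ q w u v z) :
    Commute (fcomm v u) v ∧ Commute (fcomm v u) u ∧ Commute (fcomm v u) z ∧
      fcomm v u ^ 3 = 1 ∧ φ (fcomm v u) = fcomm v u := by
  obtain ⟨-, hv₃, huz, hvz⟩ := T.pow_three_eq_one
  obtain ⟨hmv, hmu, hm₃, hφm⟩ := fcomm_central_of_shift T.map_u T.map_v huz hvz
    (by rw [T.cube_u, map_pow, T.map_z, hv₃, mul_one]) (T.cube_u ▸ hvz.pow_right 2)
  exact ⟨hmv, hmu, commute_fcomm hvz huz, hm₃, hφm⟩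

theorem map_conjHom (T : TwistedTopTail φ q w u v z) (g : G) :
    φ (conjHom w g) = conjHom u (conjHom w (φ g)) := by
  simp only [conjHom_apply, map_mul, map_inv, T.map_w, mul_inv_rev, inv_inv,
    mul_assoc, mul_inv_cancel_left]

theorem conjHom_conjHom_u (T : TwistedTopTail φ q w u v z) :
    conjHom w (conjHom w u) * conjHom w u = u ^ 2 := by
  obtain ⟨hz₃, -, -, hvz⟩ := T.pow_three_eq_one
  have h : φ (w ^ 3) = w ^ 3 * z⁻¹ := by
    rw [T.cube_w, map_mul, map_pow, T.map_v, T.map_z, hvz.mul_pow, mul_assoc, ← pow_succ, hz₃,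
      mul_one, mul_inv_cancel_right]
  rw [map_pow, T.map_w, mul_pow_three_eq, mul_right_inj] at h
  rw [← mul_left_inj u, h, ← pow_succ, T.cube_u, inv_eq_iff_mul_eq_one, ← pow_succ', hz₃]

theorem conjHom_v (T : TwistedTopTail φ q w u v z) : conjHom w v = u * v * u⁻¹ := by
  obtain ⟨hz₃, hv₃, -, hvz⟩ := T.pow_three_eq_one
  have h₂ : Commute (w * u) (v ^ 2) := by
    have h := ((Commute.refl w).pow_right 3).map φ
    rwa [T.map_w, T.cube_w, map_mul, map_pow, T.map_v, T.map_z, hvz.mul_pow, mul_assoc, ← pow_succ,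
      hz₃, mul_one] at h
  have h : Commute v (w * u) := by
    have h₄ := (h₂.pow_right 2).symm
    rwa [← pow_mul, pow_succ, hv₃, one_mul] at h₄
  rw [conjHom_apply, mul_assoc, inv_mul_eq_iff_eq_mul, ← mul_assoc, ← mul_assoc,
    eq_mul_inv_iff_mul_eq, mul_assoc, h.eq]

theorem conjHom_v_eq_mul (T : TwistedTopTail φ q w u v z) :
    conjHom w v = v * (fcomm v u)⁻¹ := by
  rw [T.conjHom_v, mul_inv_eq_iff_eq_mul, mul_assoc, (T.fcomm_central.2.1.inv_left).eq, ← mul_assoc,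
    eq_mul_inv_iff_mul_eq, mul_mul_fcomm]

theorem conjHom_z (T : TwistedTopTail φ q w u v z) : conjHom w z = (fcomm v u)⁻¹ * z := by
  obtain ⟨hmv, -, -, hm₃, -⟩ := T.fcomm_central
  have h := conjHom_of_commute (T.cube_w ▸ (Commute.refl w).pow_left 3 : Commute (v ^ 2 * z) w)
  rw [map_mul, map_pow, T.conjHom_v_eq_mul, hmv.symm.inv_right.mul_pow, mul_assoc, mul_right_inj,
    ← eq_inv_mul_iff_mul_eq] at h
  rw [h, inv_pow, inv_inv, mul_left_inj, ← mul_right_inj (fcomm v u), ← pow_succ', hm₃,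
    mul_inv_cancel]

theorem conjHom_u_pow_three (T : TwistedTopTail φ q w u v z) :
    conjHom w u ^ 3 = fcomm v u * z ^ 2 := by
  obtain ⟨-, -, hmz, hm₃, -⟩ := T.fcomm_central
  rw [← map_pow, T.cube_u, map_pow, T.conjHom_z, hmz.inv_left.mul_pow, mul_left_inj, inv_pow,
    inv_eq_iff_mul_eq_one, ← pow_succ, hm₃]

theorem map_conjHom_u (T : TwistedTopTail φ q w u v z) :
    φ (conjHom w u) = u⁻¹ * conjHom w u * u * v := by
  rw [T.map_conjHom, T.map_u, map_mul, T.conjHom_v, conjHom_apply u]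
  simp only [mul_assoc, inv_mul_cancel, mul_one]

theorem sq_mul_conjHom_v_mul (T : TwistedTopTail φ q w u v z) :
    u ^ 2 * conjHom w v * conjHom w u = conjHom w u * (u ^ 2 * v) := by
  have hh := T.conjHom_conjHom_u
  have hφg := T.map_conjHom_u
  have hφh : φ (conjHom w (conjHom w u)) =
      u⁻¹ * ((conjHom w u)⁻¹ * (u ^ 2 * conjHom w v)) * u := by
    rw [T.map_conjHom, hφg, conjHom_apply u, ← hh]
    simp only [map_mul, map_inv, mul_assoc]
  have h := congrArg φ hh
  rw [map_mul, hφh, hφg, map_pow, T.map_u] at h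
  rw [← inv_mul_eq_iff_eq_mul, ← mul_right_inj u⁻¹, ← mul_left_inj (u * v)]
  calc u⁻¹ * ((conjHom w u)⁻¹ * (u ^ 2 * conjHom w v * conjHom w u)) * (u * v)
      = (u * v) ^ 2 := by rw [← h]; simp only [mul_assoc, mul_inv_cancel_left]
    _ = u⁻¹ * (u ^ 2 * v) * (u * v) := by simp only [pow_two, mul_assoc, inv_mul_cancel_left]

/-- The subgroup generated by `m = [v,u]` and `μ = w⁻¹mw` is stable under conjugation by `w`,
because `z` commutes with `w³ = v²z`. -/
theorem conjHom_fcomm (T : TwistedTopTail φ q w u v z) :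
    Commute (conjHom w (fcomm v u)) (fcomm v u) ∧ Commute (conjHom w (fcomm v u)) v ∧
      conjHom w (conjHom w (fcomm v u)) = (conjHom w (fcomm v u))⁻¹ * (fcomm v u)⁻¹ := by
  obtain ⟨-, -, -, hvz⟩ := T.pow_three_eq_one
  obtain ⟨hmv, -, hmz, -, -⟩ := T.fcomm_central
  have hψz := T.conjHom_z
  have hψ₃ : conjHom w (conjHom w (conjHom w z)) = z := by
    rw [conjHom_iterate_three, T.cube_w, conjHom_of_commute]
    exact (hvz.symm.pow_right 2).mul_right (Commute.refl z)
  have hμv := hmv.map (conjHom w)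
  have hμz := hmz.map (conjHom w)
  have hzψz : Commute z (conjHom w z) := hψz ▸ hmz.symm.inv_right.mul_right (Commute.refl z)
  have hψzz := (hzψz.map (conjHom w)).map (conjHom w)
  rw [T.conjHom_v_eq_mul] at hμv
  rw [hψz] at hμz hzψz
  rw [hψ₃] at hψzz
  rw [hψz, map_mul, map_inv, hψz] at hψzz hψ₃
  generalize fcomm v u = m at *
  have hμz' : Commute (conjHom w m) z := by
    have h := hψzz.mul_left hzψz.symm.inv_left
    rw [mul_inv_cancel_right, Commute.inv_left_iff] at h
    exact h
  have hμm : Commute (conjHom w m) m := by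
    have h := hμz.mul_right hμz'.inv_right
    rwa [mul_inv_cancel_right, Commute.inv_right_iff] at h
  have hμv' : Commute (conjHom w m) v := by
    simpa only [inv_mul_cancel_right] using hμv.mul_right hμm
  refine ⟨hμm, hμv', ?_⟩
  rwa [map_mul, map_mul, map_inv, map_inv, hψz, ← mul_assoc, ← mul_assoc, mul_eq_right, mul_assoc,
    inv_mul_eq_one] at hψ₃

theorem commute_conjHom_u (T : TwistedTopTail φ q w u v z) :
    Commute (fcomm v u) (conjHom w u) ∧ Commute (conjHom w (fcomm v u)) (conjHom w u) ∧
      Commute (conjHom w (fcomm v u)) u ∧ Commute z (conjHom w u) := by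
  obtain ⟨hz₃, -, -, -⟩ := T.pow_three_eq_one
  obtain ⟨-, hmu, -, -, hφm⟩ := T.fcomm_central
  obtain ⟨-, -, hψμ⟩ := T.conjHom_fcomm
  have hφμ : φ (conjHom w (fcomm v u)) = conjHom u (conjHom w (fcomm v u)) := by
    rw [T.map_conjHom, hφm]
  have hμu : Commute (conjHom w (fcomm v u)) u := by
    refine commute_of_conjHom_eq (conjHom_injective w (conjHom_injective u ?_))
    rw [← hφμ, ← T.map_conjHom, hψμ, map_mul, map_mul, map_inv, map_inv, map_inv, map_inv, hφμ, hφm,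
      conjHom_of_commute hmu]
  have hμg : Commute (conjHom w (fcomm v u)) (conjHom w u) := hmu.map (conjHom w)
  have hmg : Commute (fcomm v u) (conjHom w u) := by
    have h := hμu.map (conjHom w)
    rw [hψμ] at h
    have h' := hμg.mul_left h
    rwa [mul_inv_cancel_left, Commute.inv_left_iff] at h'
  refine ⟨hmg, hμg, hμu, ?_⟩
  have hz₂ : z ^ 2 = (fcomm v u)⁻¹ * conjHom w u ^ 3 := by
    rw [T.conjHom_u_pow_three, inv_mul_cancel_left]
  have hz : z = (z ^ 2) ^ 2 := by rw [← pow_mul, pow_succ, hz₃, one_mul]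
  have hz₂g : Commute (z ^ 2) (conjHom w u) :=
    hz₂ ▸ hmg.inv_left.mul_left ((Commute.refl _).pow_left 3)
  exact hz ▸ hz₂g.pow_left 2

theorem v_mul_conjHom_u (T : TwistedTopTail φ q w u v z) :
    v * conjHom w u = conjHom w u * (v * conjHom w (fcomm v u)) := by
  obtain ⟨hμm, -, -⟩ := T.conjHom_fcomm
  have h := congrArg (conjHom w) (mul_mul_fcomm v u)
  rwa [map_mul, map_mul, map_mul, T.conjHom_v_eq_mul, mul_assoc v,
    T.commute_conjHom_u.1.inv_left.eq, mul_assoc, mul_assoc v, ← hμm.inv_right.eq, ← mul_assoc,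
    ← mul_assoc, ← mul_assoc, mul_left_inj, mul_assoc, eq_comm] at h

theorem conjHom_u_mul_u (T : TwistedTopTail φ q w u v z) :
    conjHom w u * u = u * conjHom w u * (fcomm v u * (conjHom w (fcomm v u))⁻¹) := by
  obtain ⟨hmv, hmu, -, -, -⟩ := T.fcomm_central
  obtain ⟨hμm, hμv, -⟩ := T.conjHom_fcomm
  obtain ⟨hmg, hμg, hμu, hzg⟩ := T.commute_conjHom_u
  have hvg := T.v_mul_conjHom_u
  have hsq := T.sq_mul_conjHom_v_mul
  rw [T.conjHom_v_eq_mul] at hsq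
  have hu₃ : Commute (u ^ 3) (conjHom w u) := T.cube_u ▸ hzg.pow_left 2
  generalize conjHom w u = g at *
  generalize conjHom w (fcomm v u) = μ at *
  generalize fcomm v u = m at *
  have hgu₂ : u ^ 2 * g * (m⁻¹ * μ) = g * u ^ 2 := by
    rw [← mul_left_inj v, mul_assoc g, ← hsq]
    simp only [mul_assoc, hμv.eq, hmg.inv_left.eq, hmv.inv_left.left_comm]
    rw [← mul_assoc v g, hvg]
    simp only [mul_assoc, hμm.inv_right.eq]
  have hgu : u * g = g * u * (m⁻¹ * μ) := by
    rw [← mul_right_inj (u ^ 2), ← mul_assoc, ← pow_succ, hu₃.eq, pow_succ, ← mul_assoc, ← hgu₂]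
    simp only [mul_assoc, (hmu.inv_left.mul_left hμu).eq]
  rw [hgu, mul_assoc (g * u), ← mul_assoc (m⁻¹ * μ), mul_assoc m⁻¹, hμm.eq, inv_mul_cancel_left,
    mul_inv_cancel, mul_one]

theorem conjHom_fcomm_eq (T : TwistedTopTail φ q w u v z) :
    conjHom w (fcomm v u) = fcomm v u := by
  obtain ⟨hmv, hmu, -, -, hφm⟩ := T.fcomm_central
  obtain ⟨hμm, hμv, -⟩ := T.conjHom_fcomm
  obtain ⟨hmg, hμg, hμu, -⟩ := T.commute_conjHom_u
  have hφμ : φ (conjHom w (fcomm v u)) = conjHom w (fcomm v u) := by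
    rw [T.map_conjHom, hφm, conjHom_of_commute hμu]
  have hgu := T.conjHom_u_mul_u
  have hvu := mul_mul_fcomm v u
  have hφg : φ (conjHom w u) =
      conjHom w u * (v * (fcomm v u * (conjHom w (fcomm v u))⁻¹)) := by
    rw [T.map_conjHom_u, mul_assoc u⁻¹, hgu]
    simp only [mul_assoc, inv_mul_cancel_left, hμv.inv_left.eq, hmv.left_comm]
  have hvg := T.v_mul_conjHom_u
  have h := congrArg φ hgu
  rw [map_mul, map_mul, map_mul, map_mul, map_inv, hφg, T.map_u, hφm, hφμ] at h
  have hκv := hmv.mul_left hμv.inv_left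
  have hκu := hmu.mul_left hμu.inv_left
  have hκμ := hμm.symm.mul_left (Commute.refl (conjHom w (fcomm v u))).inv_left
  generalize fcomm v u * (conjHom w (fcomm v u))⁻¹ = κ at *
  generalize conjHom w u = g at *
  generalize conjHom w (fcomm v u) = μ at *
  generalize fcomm v u = m at *
  rw [← mul_right_inj (u * g * κ * v), ← mul_left_inj (v * κ), eq_comm]
  calc u * g * κ * v * m * (v * κ) = g * (u * v * m) * (v * κ) := by
        rw [← hgu]; simp only [mul_assoc]
    _ = u * v * (g * (v * κ)) * κ := by
        rw [hvu, ← h]; simp only [mul_assoc, hκu.left_comm, hκv.eq]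
    _ = u * (v * g) * v * (κ * κ) := by simp only [mul_assoc]
    _ = u * g * κ * v * μ * (v * κ) := by
        rw [hvg]; simp only [mul_assoc, hμv.left_comm, hκv.left_comm, hκμ.left_comm]

theorem commute_u_v (T : TwistedTopTail φ q w u v z) : Commute u v := by
  obtain ⟨hz₃, hv₃, huz, hvz⟩ := T.pow_three_eq_one
  obtain ⟨hmv, -, hmz, -, -⟩ := T.fcomm_central
  obtain ⟨-, -, -, hzg⟩ := T.commute_conjHom_u
  have hgu : Commute (u ^ 2) (conjHom w u) := by
    have h := T.conjHom_u_mul_u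
    rw [T.conjHom_fcomm_eq, mul_inv_cancel, mul_one] at h
    exact (show Commute u (conjHom w u) from h.symm).pow_left 2
  have hug₃ : (u ^ 2 * conjHom w u) ^ 3 = fcomm v u := by
    rw [hgu.mul_pow, T.conjHom_u_pow_three, ← pow_mul, mul_comm, pow_mul, T.cube_u, ← mul_assoc,
      ← ((hmz.pow_right 2).pow_right 2).eq, mul_assoc, ← pow_mul, ← pow_add, pow_mul z 3 2, hz₃,
      one_pow, mul_one]
  have hq : q * (w ^ 3 * conjHom w u * u ^ 2 * v) = conjHom z q := by
    rw [← T.map_map_map, T.map_q, map_mul, T.map_q, map_mul, map_mul, T.map_q, T.map_w, map_mul,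
      T.map_w, T.map_u]
    simp only [pow_succ, pow_zero, one_mul, conjHom_apply, mul_assoc, mul_inv_cancel_left]
  have hq' : conjHom q z⁻¹ = conjHom v (u ^ 2 * conjHom w u) := by
    have hv : v ^ 2 = v⁻¹ := eq_inv_of_mul_eq_one_left (by rw [← pow_succ, hv₃])
    rw [T.cube_w, hv, ← eq_inv_mul_iff_mul_eq] at hq
    rw [hgu.eq, conjHom_apply v, conjHom_apply q, ← mul_left_inj z, mul_assoc _ q z,
      mul_assoc q⁻¹, ← mul_assoc z⁻¹, ← conjHom_apply z, ← hq]
    simp only [mul_assoc, hvz.eq, (huz.pow_left 2).left_comm, hzg.left_comm]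
  have hm : fcomm v u = 1 := by
    have h := congrArg (· ^ 3) hq'
    simp only [← map_pow, hug₃, conjHom_of_commute hmv, inv_pow, hz₃, inv_one, map_one] at h
    exact h.symm
  have h := mul_mul_fcomm v u
  rwa [hm, mul_one] at h

theorem of_map_map_map_eq_conjHom (T : TwistedTopTail φ q w u v z) :
    z ^ 3 = 1 ∧ v ^ 3 = 1 ∧ Commute u v ∧ Commute u z ∧ Commute v z := by
  obtain ⟨hz₃, hv₃, huz, hvz⟩ := T.pow_three_eq_one
  exact ⟨hz₃, hv₃, T.commute_u_v, huz, hvz⟩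

end TwistedTopTail

/-! ### Inverting the generator `x` -/

/-- The defining relations of `G_Q` with `R_x = x³ s_c⁻ˡ` and `R_y = y³ s₃⁻² s₄⁻¹ s_c⁻ᵏ`, for
elements of an arbitrary group. The irrelevant entries `s_j`, `j > c`, are set to `1`. -/
structure GQRelations {G : Type*} [Group G] (c l k : ℕ) (x y t : G) (s : ℕ → G) : Prop where
  two : s 2 = fcomm y x
  three : t = fcomm (s 2) y
  t_cube : t ^ 3 = 1
  x_cube : x ^ 3 = s c ^ l
  y_cube : y ^ 3 = s c ^ k * s 4 * s 3 ^ 2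
  succ : ∀ j, 2 ≤ j → j < c → s (j + 1) = fcomm (s j) x
  cube : ∀ j, 2 ≤ j → j + 3 ≤ c → s j ^ 3 = s (j + 2) ^ 2 * s (j + 3)
  cube_last : s (c - 2) ^ 3 = s c ^ 2
  eq_one : ∀ j, c < j → s j = 1

theorem Tail.gqRelations {G : Type*} [Group G] {c l k : ℕ} {x y t : G} {s : ℕ → G}
    (T : Tail (conjHom x) s c) (hc : 4 ≤ c) (h₂ : s 2 = fcomm y x) (ht : t = fcomm (s 2) y)
    (ht₃ : t ^ 3 = 1) (hx : x ^ 3 = s c ^ l) (hy : y ^ 3 = s c ^ k * s 4 * s 3 ^ 2) :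
    GQRelations c l k x y t s where
  two := h₂
  three := ht
  t_cube := ht₃
  x_cube := hx
  y_cube := hy
  succ j hj _ := by
    have h := T.shift j hj
    rwa [conjHom_eq_mul_fcomm, mul_right_inj, eq_comm] at h
  cube j hj _ := T.cube j hj
  cube_last := by
    have h := T.cube (c - 2) (by omega)
    rwa [Nat.sub_add_cancel (by omega), T.eq_one (c - 2 + 3) (by omega), mul_one] at h
  eq_one := T.eq_one

namespace GQRelations

variable {G : Type*} [Group G] {c l k : ℕ} {x y t : G} {s : ℕ → G}

theorem conjHom_y (R : GQRelations c l k x y t s) : conjHom x y = y * s 2 := by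
  rw [conjHom_eq_mul_fcomm, R.two]

theorem conjHom_s (R : GQRelations c l k x y t s) (j : ℕ) (hj : 2 ≤ j) (hjc : j < c) :
    conjHom x (s j) = s j * s (j + 1) := by
  rw [conjHom_eq_mul_fcomm, R.succ j hj hjc]

theorem topTail (R : GQRelations c l k x y t s) (hc : 6 ≤ c) :
    TopTail (conjHom x) (s (c - 4)) (s (c - 3)) (s (c - 2)) (s (c - 1)) (s c) := by
  obtain ⟨n, rfl⟩ : ∃ n, c = n + 6 := ⟨c - 6, by omega⟩
  exact ⟨R.conjHom_s (n + 2) (by omega) (by omega), R.conjHom_s (n + 3) (by omega) (by omega),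
    R.conjHom_s (n + 4) (by omega) (by omega), R.conjHom_s (n + 5) (by omega) (by omega),
    R.cube (n + 3) (by omega) (by omega), R.cube_last⟩

theorem last_relations (R : GQRelations c l k x y t s) (hc : 6 ≤ c) (hl : l = 0 ∨ l = 1) :
    conjHom x (s c) = s c ∧ s c ^ 3 = 1 ∧ s (c - 1) ^ 3 = 1 ∧ Commute (s (c - 2)) (s (c - 1)) ∧
      Commute (s (c - 2)) (s c) ∧ Commute (s (c - 1)) (s c) := by
  obtain rfl | rfl := hl
  · refine (R.topTail hc).of_map_map_map_eq ?_
    rw [conjHom_iterate_three, R.x_cube, pow_zero, conjHom_of_commute (Commute.one_right _)]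
  · have hz : x ^ 3 = s c := R.x_cube.trans (pow_one _)
    have hφz : conjHom x (s c) = s c :=
      conjHom_of_commute (hz ▸ (Commute.refl x).pow_left 3)
    exact ⟨hφz, TwistedTopTail.of_map_map_map_eq_conjHom
      ⟨R.topTail hc, hφz, fun g => by rw [conjHom_iterate_three, hz]⟩⟩

theorem tail (R : GQRelations c l k x y t s) (hc : 6 ≤ c) (hl : l = 0 ∨ l = 1) :
    Tail (conjHom x) s c where
  shift j hj := by
    obtain hjc | rfl | hjc := lt_trichotomy j c
    · exact R.conjHom_s j hj hjc
    · rw [(R.last_relations hc hl).1, R.eq_one (j + 1) (by omega), mul_one]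
    · rw [R.eq_one j hjc, R.eq_one (j + 1) (by omega), map_one, mul_one]
  cube j hj := by
    obtain ⟨-, hz₃, hv₃, -⟩ := R.last_relations hc hl
    obtain hjc | rfl | rfl | rfl | hjc : j + 3 ≤ c ∨ j = c - 2 ∨ j = c - 1 ∨ j = c ∨ c < j := by
      omega
    · exact R.cube j hj hjc
    · rw [R.cube_last, Nat.sub_add_cancel (by omega), R.eq_one (c - 2 + 3) (by omega), mul_one]
    · rw [hv₃, R.eq_one _ (by omega), R.eq_one _ (by omega), one_pow, mul_one]
    · rw [hz₃, R.eq_one _ (by omega), R.eq_one _ (by omega), one_pow, mul_one]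
    · rw [R.eq_one _ hjc, R.eq_one _ (by omega), R.eq_one _ (by omega), one_pow, one_pow, mul_one]
  eq_one := R.eq_one

theorem conjHom_conjHom_conjHom (R : GQRelations c l k x y t s) {g : G} (hg : Commute g (s c)) :
    conjHom x (conjHom x (conjHom x g)) = g := by
  rw [conjHom_iterate_three, R.x_cube, conjHom_of_commute (hg.pow_right l)]

theorem commutesFrom_two (R : GQRelations c l k x y t s) (hc : 6 ≤ c) (hl : l = 0 ∨ l = 1) :
    CommutesFrom s 2 := by
  obtain ⟨-, -, -, huv, huz, hvz⟩ := R.last_relations hc hl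
  refine (R.tail hc hl).commutesFrom_two (fun g => R.conjHom_conjHom_conjHom) (by omega) ?_
    R.conjHom_y R.y_cube
  have hlast : ∀ j, c - 2 ≤ j → s j = s (c - 2) ∨ s j = s (c - 1) ∨ s j = s c ∨ s j = 1 := by
    intro j hj
    obtain rfl | rfl | rfl | hj : j = c - 2 ∨ j = c - 1 ∨ j = c ∨ c < j := by omega
    exacts [.inl rfl, .inr (.inl rfl), .inr (.inr (.inl rfl)), .inr (.inr (.inr (R.eq_one j hj)))]
  intro i j hi hj
  obtain hi | hi | hi | hi := hlast i hi <;> obtain hj | hj | hj | hj := hlast j hj <;>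
    simp only [hi, hj, Commute.refl, Commute.one_left, Commute.one_right, huv, huv.symm, huz,
      huz.symm, hvz, hvz.symm]

end GQRelations

/-- The sequence `s_j` for the generators `x⁻¹, y` in place of `x, y`, where `θ` is conjugation by
`x⁻¹`. -/
def flipTail {G : Type*} [Group G] (θ : G →* G) (s : ℕ → G) (j : ℕ) : G :=
  θ^[j + 2] (s j) ^ (-1 : ℤ) ^ (j + 1)

section Flip

variable {G : Type*} [Group G] {φ θ : G →* G} {s r : ℕ → G} {c j : ℕ}

theorem tail_of_alternating (hshift : ∀ j, 2 ≤ j → θ (r j) = r j * (r (j + 1))⁻¹)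
    (hcube : ∀ j, 2 ≤ j → r j ^ 3 = r (j + 2) ^ 2 * (r (j + 3))⁻¹)
    (hr : ∀ j, 2 ≤ j → Commute (r j) (r (j + 1))) (hone : ∀ j, c < j → r j = 1) :
    Tail θ (fun j => r j ^ (-1 : ℤ) ^ (j + 1)) c where
  shift j hj := by
    rw [map_zpow, hshift j hj, (hr j hj).inv_right.mul_zpow, pow_succ _ (j + 1), mul_neg_one,
      zpow_neg, inv_zpow]
  cube j hj := by
    have hpow : ∀ (g : G) (n : ℕ) (ε : ℤ), (g ^ ε) ^ n = (g ^ n) ^ ε := fun g n ε => by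
      rw [← zpow_natCast, ← zpow_natCast, zpow_comm]
    rw [show (-1 : ℤ) ^ (j + 2 + 1) = (-1) ^ (j + 1) by ring,
      show (-1 : ℤ) ^ (j + 3 + 1) = -(-1) ^ (j + 1) by ring, hpow, hpow, hcube j hj,
      ((hr (j + 2) (by omega)).inv_right.pow_left 2).mul_zpow, zpow_neg, inv_zpow]
  eq_one j hj := by rw [hone j hj, one_zpow]

theorem flipTail_two (h : θ (θ (θ (s 2))) = s 2) : flipTail θ s 2 = (θ (s 2))⁻¹ := by
  change θ (θ (θ (θ (s 2)))) ^ (-1 : ℤ) ^ 3 = _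
  rw [h, Odd.neg_one_pow (by decide), zpow_neg_one]

theorem flipTail_three (h : θ (θ (θ (s 3))) = s 3) : flipTail θ s 3 = θ (θ (s 3)) := by
  change θ (θ (θ (θ (θ (s 3))))) ^ (-1 : ℤ) ^ 4 = _
  rw [h, Even.neg_one_pow (by decide), zpow_one]

theorem flipTail_four (h : θ (θ (θ (s 4))) = s 4) : flipTail θ s 4 = (s 4)⁻¹ := by
  change θ (θ (θ (θ (θ (θ (s 4)))))) ^ (-1 : ℤ) ^ 5 = _
  rw [h, h, Odd.neg_one_pow (by decide), zpow_neg_one]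

theorem flipTail_of_even (hj : Even j) (h : θ (s j) = s j) : flipTail θ s j = (s j)⁻¹ := by
  rw [flipTail, hj.add_one.neg_one_pow, zpow_neg_one, Function.iterate_fixed h]

theorem Tail.flip (T : Tail φ s c) (hs : CommutesFrom s 2) (hθ : ∀ g, θ (φ g) = g)
    (hφ : ∀ j, 2 ≤ j → φ (φ (φ (s j))) = s j) : Tail θ (flipTail θ s) c := by
  have hθφ : ∀ j, 2 ≤ j → θ (θ (s j)) = φ (s j) := fun j hj => by
    rw [← hφ j hj, hθ, hθ, hφ j hj]
  have hθs : ∀ j, 2 ≤ j → θ (s j) = s j * (θ (s (j + 1)))⁻¹ := fun j hj => by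
    rw [eq_mul_inv_iff_mul_eq, ← map_mul, ← T.shift j hj, hθ]
  refine tail_of_alternating (fun j hj => ?_) (fun j hj => ?_) (fun j hj => ?_) fun j hj => ?_
  · rw [← Function.iterate_succ_apply' θ, Function.iterate_succ_apply, hθs j hj, iterate_map_mul,
      iterate_map_inv, ← Function.iterate_succ_apply θ]
  · have h : s j ^ 3 = θ (θ (s (j + 2))) ^ 2 * (θ (θ (θ (s (j + 3)))))⁻¹ := by
      have hcomm : Commute (s (j + 2)) (s (j + 3)) := hs (by omega) (by omega)
      rw [hθφ _ (by omega), hθφ _ (by omega), hθ, T.shift _ (by omega), hcomm.mul_pow,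
        pow_two (s (j + 3)), mul_assoc, mul_inv_cancel_right, T.cube j hj]
    rw [← iterate_map_pow, h, iterate_map_mul, iterate_map_pow, iterate_map_inv]
    simp only [← Function.iterate_succ_apply θ]
  · have h := ((hs hj (by omega)).mul_left (Commute.refl (s (j + 1)))).map θ
    rw [← T.shift j hj, hθ] at h
    rw [Function.iterate_succ_apply θ (j + 2), Commute, SemiconjBy, ← iterate_map_mul, h.eq,
      iterate_map_mul]
  · rw [T.eq_one j hj, iterate_map_one]

end Flip

namespace GQRelations

variable {G : Type*} [Group G] {c l k k' : ℕ} {x y t : G} {s : ℕ → G}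

theorem commute_t_s_two (R : GQRelations c l k x y t s) (hc : 6 ≤ c) (hl : l = 0 ∨ l = 1) :
    Commute t (s 2) := by
  have hs := R.commutesFrom_two hc hl
  exact R.three ▸ (R.tail hc hl).fcomm_commute_two (by omega) hs R.conjHom_y
    (R.y_cube.trans (CommutesFrom.pow_mul_mul_sq (fun i j hi hj => hs (by omega) (by omega))
      (by omega)))

theorem commute_y_s (R : GQRelations c l k x y t s) (hc : 6 ≤ c) (hl : l = 0 ∨ l = 1) {j : ℕ}
    (hj : 3 ≤ j) : Commute y (s j) := by
  have hs := R.commutesFrom_two hc hl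
  exact (R.tail hc hl).commute_of_pow_three_eq (by omega) hs R.conjHom_y
    (R.y_cube.trans (CommutesFrom.pow_mul_mul_sq (fun i j hi hj => hs (by omega) (by omega))
      (by omega))) hj

theorem inv_t_eq_fcomm (R : GQRelations c l k x y t s) {a : G} (ha : Commute a y)
    (ht : Commute t (s 2)) : t⁻¹ = fcomm (s 2 * a)⁻¹ y :=
  calc t⁻¹ = s 2 * (s 2 * t)⁻¹ := by rw [← ht.eq, mul_inv_rev, mul_inv_cancel_left]
    _ = s 2 * (conjHom y (s 2))⁻¹ := by rw [conjHom_eq_mul_fcomm, R.three]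
    _ = s 2 * (a * y⁻¹) * a⁻¹ * (s 2)⁻¹ * y := by
      rw [ha.inv_right.eq, conjHom_apply]
      simp only [mul_inv_rev, inv_inv, mul_assoc, mul_inv_cancel_left]
    _ = fcomm (s 2 * a)⁻¹ y := by simp only [fcomm, mul_inv_rev, inv_inv, mul_assoc]

theorem conjHom_conjHom_conjHom_s (R : GQRelations c l k x y t s) (hc : 6 ≤ c)
    (hl : l = 0 ∨ l = 1) {j : ℕ} (hj : 2 ≤ j) :
    conjHom x (conjHom x (conjHom x (s j))) = s j :=
  R.conjHom_conjHom_conjHom (R.commutesFrom_two hc hl hj (by omega))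

theorem conjHom_inv_conjHom_inv_s (R : GQRelations c l k x y t s) (hc : 6 ≤ c)
    (hl : l = 0 ∨ l = 1) {j : ℕ} (hj : 2 ≤ j) :
    conjHom x⁻¹ (conjHom x⁻¹ (s j)) = conjHom x (s j) := by
  nth_rw 1 [← R.conjHom_conjHom_conjHom_s hc hl hj]
  rw [conjHom_inv_conjHom, conjHom_inv_conjHom]

theorem conjHom_inv_s_two (R : GQRelations c l k x y t s) (hc : 6 ≤ c) (hl : l = 0 ∨ l = 1) :
    conjHom x⁻¹ (s 2) = s 2 * (s 3 ^ 2 * s 4) := by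
  have T := R.tail hc hl
  nth_rw 1 [← R.conjHom_conjHom_conjHom_s hc hl le_rfl]
  rw [conjHom_inv_conjHom, T.shift 2 le_rfl, map_mul, T.shift 2 le_rfl, T.shift 3 (by omega)]
  simp only [pow_two, mul_assoc]

/-- Since `c` is even, `s_c` is replaced by its inverse; so is `x³`, while `y³` is kept, whence
`l` is unchanged and `k` becomes `-k`. -/
theorem flip (R : GQRelations c l k x y t s) (hc : 6 ≤ c) (heven : Even c) (hl : l = 0 ∨ l = 1)
    (hk : 3 ∣ k + k') :
    GQRelations c l k' x⁻¹ y t⁻¹ (flipTail (conjHom x⁻¹) s) := by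
  have T := R.tail hc hl
  have hs := R.commutesFrom_two hc hl
  have hθ := conjHom_inv_conjHom x
  have hφ := fun j hj => R.conjHom_conjHom_conjHom_s hc hl (j := j) hj
  have hθθ := fun j hj => R.conjHom_inv_conjHom_inv_s hc hl (j := j) hj
  have hθ₃ : ∀ j, 2 ≤ j → conjHom x⁻¹ (conjHom x⁻¹ (conjHom x⁻¹ (s j))) = s j := fun j hj => by
    rw [hθθ j hj, hθ]
  have h₂ := flipTail_two (hθ₃ 2 le_rfl)
  have h₃ : flipTail (conjHom x⁻¹) s 3 = s 3 * s 4 := by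
    rw [flipTail_three (hθ₃ 3 (by omega)), hθθ 3 (by omega), T.shift 3 (by omega)]
  have h₄ := flipTail_four (hθ₃ 4 (by omega))
  have hc' : flipTail (conjHom x⁻¹) s c = (s c)⁻¹ := flipTail_of_even heven (by
    nth_rw 1 [← T.map_last (by omega), hθ])
  have h₃₄ : Commute (s 3) (s 4) := hs (by omega) (by omega)
  refine (T.flip hs hθ hφ).gqRelations (by omega) ?_ ?_ ?_ ?_ ?_
  · have h := hθ y
    rwa [R.conjHom_y, map_mul, ← eq_mul_inv_iff_mul_eq, conjHom_eq_mul_fcomm, ← h₂, mul_right_inj,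
      eq_comm] at h
  · rw [h₂, R.conjHom_inv_s_two hc hl,
      R.inv_t_eq_fcomm (((R.commute_y_s hc hl le_rfl).pow_right 2).mul_right
        (R.commute_y_s (j := 4) hc hl (by omega))).symm (R.commute_t_s_two hc hl)]
  · rw [inv_pow, R.t_cube, inv_one]
  · rw [inv_pow, R.x_cube, hc', inv_pow]
  · have hk' : (s c)⁻¹ ^ k' = s c ^ k := by
      obtain ⟨m, hm⟩ := hk
      rw [inv_pow, inv_eq_iff_mul_eq_one, ← pow_add, add_comm, hm, pow_mul,
        (R.last_relations hc hl).2.1, one_pow]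
    rw [hc', h₃, h₄, R.y_cube, hk', mul_assoc, mul_assoc, mul_right_inj, h₃₄.mul_pow, pow_two (s 4),
      ← mul_assoc (s 3 ^ 2), ((h₃₄.pow_left 2).mul_left (Commute.refl (s 4))).eq,
      inv_mul_cancel_left, (h₃₄.pow_left 2).eq]

end GQRelations

/-! ### The presented group -/

section Presentation

variable {H : Type*} [Group H] {c l k : ℕ}

/-- The relator word `R_x = x³ s_c⁻ˡ`. -/
def relX (c l : ℕ) : FreeGroup ℕ := xw ^ 3 * (sw c ^ l)⁻¹

/-- The relator word `R_y = y³ s₃⁻² s₄⁻¹ s_c⁻ᵏ`. -/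
def relY (c k : ℕ) : FreeGroup ℕ := Ry0 * (sw c ^ k)⁻¹

theorem relX_zero (c : ℕ) : relX c 0 = xw ^ 3 := by rw [relX, pow_zero, inv_one, mul_one]

theorem relX_one (c : ℕ) : relX c 1 = xw ^ 3 * (sw c)⁻¹ := by rw [relX, pow_one]

theorem relY_zero (c : ℕ) : relY c 0 = Ry0 := by rw [relY, pow_zero, inv_one, mul_one]

theorem relY_one (c : ℕ) : relY c 1 = Ry1 c := by rw [relY, pow_one, Ry0, Ry1]

theorem relY_two (c : ℕ) : relY c 2 = Ry2 c := rfl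

theorem map_relX_eq_one_iff (f : FreeGroup ℕ →* H) :
    f (relX c l) = 1 ↔ f xw ^ 3 = f (sw c) ^ l := by
  simp only [relX, map_mul, map_inv, map_pow, mul_inv_eq_one]

theorem map_relY_eq_one_iff (f : FreeGroup ℕ →* H) :
    f (relY c k) = 1 ↔ f yw ^ 3 = f (sw c) ^ k * f (sw 4) * f (sw 3) ^ 2 := by
  simp only [relY, Ry0, map_mul, map_inv, map_pow, mul_inv_eq_iff_eq_mul, one_mul]

theorem forall_rels_map_eq_one_iff (f : FreeGroup ℕ →* H) :
    (∀ r ∈ rels c (relX c l) (relY c k), f r = 1) ↔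
      GQRelations c l k (f xw) (f yw) (f t3w) fun j => f (sw j) := by
  have heq (a b : FreeGroup ℕ) : f (a * b⁻¹) = 1 ↔ f a = f b := by
    rw [map_mul, map_inv, mul_inv_eq_one]
  constructor
  · intro h
    refine ⟨?_, ?_, ?_, (map_relX_eq_one_iff f).1 (h _ (by simp [rels])),
      (map_relY_eq_one_iff f).1 (h _ (by simp [rels])), fun j hj hjc => ?_, fun j hj hjc => ?_, ?_,
      fun j hj => h _ (.inr ⟨j + 1, by omega, rfl⟩)⟩
    · exact ((heq _ _).1 (h _ (by simp [rels]))).trans (map_fcomm f _ _)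
    · exact ((heq _ _).1 (h _ (by simp [rels]))).trans (map_fcomm f _ _)
    · exact (map_pow f _ _).symm.trans (h _ (by simp [rels]))
    · exact ((heq _ _).1 (h _ (.inl (.inl (.inr ⟨j + 1, by omega, by omega, rfl⟩))))).trans
        (map_fcomm f _ _)
    · have := (heq _ _).1 (h _ (.inl (.inr ⟨j, hj, by omega, rfl⟩)))
      simpa only [map_mul, map_pow] using this
    · have := (heq _ _).1 (h (sw (c - 2) ^ 3 * (sw c ^ 2)⁻¹) (by simp [rels]))
      simpa only [map_pow] using this
  · rintro R r (((hr | ⟨j, hj, hjc, rfl⟩) | ⟨j, hj, hjc, rfl⟩) | ⟨n, hn, rfl⟩)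
    · simp only [Set.mem_insert_iff, Set.mem_singleton_iff] at hr
      obtain rfl | rfl | rfl | rfl | rfl | rfl := hr
      · exact (heq _ _).2 (R.two.trans (map_fcomm f _ _).symm)
      · exact (heq _ _).2 (R.three.trans (map_fcomm f _ _).symm)
      · exact (map_pow f _ _).trans R.t_cube
      · simpa only [heq, map_pow] using R.cube_last
      · exact (map_relX_eq_one_iff f).2 R.x_cube
      · exact (map_relY_eq_one_iff f).2 R.y_cube
    · obtain ⟨j, rfl⟩ : ∃ i, j = i + 1 := ⟨j - 1, by omega⟩
      exact (heq _ _).2 ((R.succ j (by omega) (by omega)).trans (map_fcomm f _ _).symm)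
    · refine (heq _ _).2 ?_
      simpa only [map_pow, map_mul] using R.cube j hj (by omega)
    · obtain ⟨n, rfl⟩ : ∃ i, n = i + 1 := ⟨n - 1, by omega⟩
      exact R.eq_one n (by omega)

namespace GQRelations

theorem congr {x y t : H} {s s' : ℕ → H} (R : GQRelations c l k x y t s) (hc : 4 ≤ c)
    (h : ∀ j, 2 ≤ j → s' j = s j) : GQRelations c l k x y t s' where
  two := by rw [h 2 le_rfl, R.two]
  three := by rw [h 2 le_rfl, R.three]
  t_cube := R.t_cube
  x_cube := by rw [h c (by omega), R.x_cube]
  y_cube := by rw [h c (by omega), h 4 (by omega), h 3 (by omega), R.y_cube]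
  succ j hj hjc := by rw [h j hj, h (j + 1) (by omega), R.succ j hj hjc]
  cube j hj hjc := by rw [h j hj, h (j + 2) (by omega), h (j + 3) (by omega), R.cube j hj hjc]
  cube_last := by rw [h c (by omega), h (c - 2) (by omega), R.cube_last]
  eq_one j hj := by rw [h j (by omega), R.eq_one j hj]

theorem map {G : Type*} [Group G] {x y t : G} {s : ℕ → G} (R : GQRelations c l k x y t s)
    (f : G →* H) : GQRelations c l k (f x) (f y) (f t) fun j => f (s j) where
  two := by rw [R.two, map_fcomm]
  three := by rw [R.three, map_fcomm]
  t_cube := by rw [← map_pow, R.t_cube, map_one]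
  x_cube := by rw [← map_pow, ← map_pow, R.x_cube]
  y_cube := by simp only [← map_pow, ← map_mul, R.y_cube]
  succ j hj hjc := by rw [R.succ j hj hjc, map_fcomm]
  cube j hj hjc := by simp only [← map_pow, ← map_mul, R.cube j hj hjc]
  cube_last := by simp only [← map_pow, R.cube_last]
  eq_one j hj := by rw [R.eq_one j hj, map_one]

end GQRelations

/-- The group `G_Q` with `R_x = x³ s_c⁻ˡ` and `R_y = y³ s₃⁻² s₄⁻¹ s_c⁻ᵏ`. -/
abbrev GQPow (c l k : ℕ) : Type := GQ c (relX c l) (relY c k)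

namespace GQPow

/-- The class of a word in `G_Q`. -/
abbrev mk (c l k : ℕ) : FreeGroup ℕ →* GQPow c l k := PresentedGroup.mk _

theorem gqRelations (c l k : ℕ) :
    GQRelations c l k (mk c l k xw) (mk c l k yw) (mk c l k t3w) fun j => mk c l k (sw j) :=
  (forall_rels_map_eq_one_iff _).1 fun _ => PresentedGroup.one_of_mem

/-- The value of the `n`-th generator when `x, y, t₃, s₂, s₃, …` have prescribed values. -/
def generatorValue (x y t : H) (s : ℕ → H) : ℕ → H
  | 0 => x
  | 1 => y
  | 2 => t
  | n + 3 => s (n + 2)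

theorem exists_hom {x y t : H} {s : ℕ → H} (R : GQRelations c l k x y t s) (hc : 4 ≤ c) :
    ∃ f : GQPow c l k →* H, f (mk c l k xw) = x ∧ f (mk c l k yw) = y := by
  set g := FreeGroup.lift (generatorValue x y t s)
  have hx : g xw = x := FreeGroup.lift_apply_of
  have hy : g yw = y := FreeGroup.lift_apply_of
  have ht : g t3w = t := FreeGroup.lift_apply_of
  have hs : ∀ j, 2 ≤ j → g (sw j) = s j := fun j hj => by
    obtain ⟨j, rfl⟩ : ∃ i, j = i + 2 := ⟨j - 2, by omega⟩
    exact FreeGroup.lift_apply_of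
  have hR : GQRelations c l k (g xw) (g yw) (g t3w) fun j => g (sw j) := by
    rw [hx, hy, ht]
    exact R.congr hc hs
  exact ⟨PresentedGroup.toGroup (f := generatorValue x y t s)
    ((forall_rels_map_eq_one_iff g).2 hR), hx, hy⟩

theorem closure_eq_top (c l k : ℕ) : Subgroup.closure {mk c l k xw, mk c l k yw} = ⊤ := by
  have R := gqRelations c l k
  rw [eq_top_iff, ← PresentedGroup.closure_range_of, Subgroup.closure_le]
  set C := Subgroup.closure {mk c l k xw, mk c l k yw}
  have hx : mk c l k xw ∈ C := Subgroup.subset_closure (.inl rfl)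
  have hy : mk c l k yw ∈ C := Subgroup.subset_closure (.inr rfl)
  have hcomm : ∀ {a b}, a ∈ C → b ∈ C → fcomm a b ∈ C := fun ha hb =>
    C.mul_mem (C.mul_mem (C.mul_mem (C.inv_mem ha) (C.inv_mem hb)) ha) hb
  have hs : ∀ j, 2 ≤ j → mk c l k (sw j) ∈ C := fun j hj => by
    induction j, hj using Nat.le_induction with
    | base => exact R.two ▸ hcomm hy hx
    | succ j hj ih =>
      obtain hjc | hjc := Nat.lt_or_ge j c
      · exact R.succ j hj hjc ▸ hcomm ih hx
      · exact R.eq_one (j + 1) (by omega) ▸ C.one_mem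
  have ht : mk c l k t3w ∈ C := R.three ▸ hcomm (hs 2 le_rfl) hy
  rintro _ ⟨n, rfl⟩
  match n with
  | 0 => exact hx
  | 1 => exact hy
  | 2 => exact ht
  | n + 3 => exact hs (n + 2) (by omega)

theorem hom_ext {f g : GQPow c l k →* H} (hx : f (mk c l k xw) = g (mk c l k xw))
    (hy : f (mk c l k yw) = g (mk c l k yw)) : f = g :=
  MonoidHom.eq_of_eqOn_dense (closure_eq_top c l k) fun _ h => h.elim
    (fun h => h ▸ hx) (fun h => Set.mem_singleton_iff.1 h ▸ hy)

theorem nonempty_mulEquiv {k' : ℕ} (hc : 6 ≤ c) (heven : Even c) (hl : l = 0 ∨ l = 1)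
    (hk : 3 ∣ k + k') : Nonempty (GQPow c l k ≃* GQPow c l k') := by
  obtain ⟨f, hfx, hfy⟩ := exists_hom ((gqRelations c l k').flip hc heven hl
    (by rwa [add_comm])) (by omega)
  obtain ⟨g, hgx, hgy⟩ := exists_hom ((gqRelations c l k).flip hc heven hl hk) (by omega)
  refine ⟨f.toMulEquiv g (hom_ext ?_ ?_) (hom_ext ?_ ?_)⟩
  all_goals simp only [MonoidHom.comp_apply, MonoidHom.id_apply, hfx, hfy, hgx, hgy, map_inv,
    inv_inv]

end GQPow

end Presentation

/-! ### Wreath products by `ℤ/3` -/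

section Wreath

/-- The wreath product of `A` by `ℤ/3`, with `A` written additively: `ℤ/3` acts by translation on
the base group of functions `ℤ/3 → A`. -/
@[ext]
structure Wr (A : Type*) where
  top : ZMod 3
  fn : ZMod 3 → A

namespace Wr

variable {A : Type*}

/-- The embedding of the base group. -/
def base (v : ZMod 3 → A) : Wr A := ⟨0, v⟩

@[simp] theorem base_top (v : ZMod 3 → A) : (base v).top = 0 := rfl

@[simp] theorem base_fn (v : ZMod 3 → A) : (base v).fn = v := rfl

theorem base_injective : Function.Injective (base (A := A)) := fun _ _ h => congrArg fn h

theorem base_fn_of_top_eq_zero {g : Wr A} (hg : g.top = 0) : base g.fn = g := by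
  ext <;> simp [hg]

variable [AddCommGroup A] {a : ZMod 3} {v : ZMod 3 → A} {g x y t : Wr A} {s : ℕ → Wr A}
  {c j l k : ℕ}

instance : Mul (Wr A) := ⟨fun g h => ⟨g.top + h.top, fun p => g.fn (p + h.top) + h.fn p⟩⟩

instance : One (Wr A) := ⟨⟨0, 0⟩⟩

instance : Inv (Wr A) := ⟨fun g => ⟨-g.top, fun p => -g.fn (p - g.top)⟩⟩

@[simp] theorem mul_top (g h : Wr A) : (g * h).top = g.top + h.top := rfl

@[simp] theorem mul_fn (g h : Wr A) (p : ZMod 3) :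
    (g * h).fn p = g.fn (p + h.top) + h.fn p := rfl

@[simp] theorem one_top : (1 : Wr A).top = 0 := rfl

@[simp] theorem one_fn : (1 : Wr A).fn = 0 := rfl

@[simp] theorem inv_top (g : Wr A) : g⁻¹.top = -g.top := rfl

@[simp] theorem inv_fn (g : Wr A) (p : ZMod 3) : g⁻¹.fn p = -g.fn (p - g.top) := rfl

instance : Group (Wr A) := Group.ofLeftAxioms
  (fun g h k => by ext <;> simp [add_assoc, add_comm, add_left_comm])
  (fun g => by ext <;> simp) (fun g => by ext <;> simp)

/-- The projection of the wreath product onto `ℤ/3`. -/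
def topHom (A : Type*) [AddCommGroup A] : Wr A →* Multiplicative (ZMod 3) where
  toFun g := Multiplicative.ofAdd g.top
  map_one' := rfl
  map_mul' _ _ := rfl

theorem base_zero : base (0 : ZMod 3 → A) = 1 := rfl

theorem base_mul (v w : ZMod 3 → A) : base v * base w = base (v + w) := by
  ext <;> simp

theorem base_pow (v : ZMod 3 → A) (n : ℕ) : base v ^ n = base (n • v) := by
  induction n with
  | zero => rw [pow_zero, zero_smul, base_zero]
  | succ n ih => rw [pow_succ, ih, base_mul, succ_nsmul]

/-- The difference operator with step `a`. -/
def diff (a : ZMod 3) (v : ZMod 3 → A) : ZMod 3 → A := fun p => v (p + a) - v p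

/-- The sum of the values of a function in the base group. -/
def total (v : ZMod 3 → A) : A := ∑ p, v p

theorem diff_zero (v : ZMod 3 → A) : diff 0 v = 0 := by
  ext p
  simp [diff]

theorem diff_const (a : ZMod 3) (b : A) : diff a (Function.const _ b) = 0 := by
  ext p
  simp [diff]

theorem conjHom_base (x : Wr A) (v : ZMod 3 → A) :
    conjHom x (base v) = base (v + diff x.top v) := by
  ext <;> simp [conjHom_apply, diff, add_comm]

theorem fcomm_base (x : Wr A) (v : ZMod 3 → A) : fcomm (base v) x = base (diff x.top v) := by
  rw [← mul_right_inj (base v), ← conjHom_eq_mul_fcomm, conjHom_base, base_mul]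

theorem fcomm_top (g h : Wr A) : (fcomm g h).top = 0 := by simp [fcomm]

theorem add_add_self (a p : ZMod 3) : p + a + a + a = p := by
  revert a p
  decide

theorem add_add_eq_total (ha : a ≠ 0) (v : ZMod 3 → A) (p : ZMod 3) :
    v (p + a + a) + v (p + a) + v p = total v := by
  have huniv : ∀ a p : ZMod 3, a ≠ 0 → Finset.univ = {p + a + a, p + a, p} := by decide
  have hdisj : ∀ a p : ZMod 3, a ≠ 0 → p + a + a ∉ ({p + a, p} : Finset (ZMod 3)) ∧ p + a ≠ p := by
    decide
  obtain ⟨h₂, h₁⟩ := hdisj a p ha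
  rw [total, huniv a p ha, Finset.sum_insert h₂, Finset.sum_pair h₁, add_assoc]

theorem pow_three_of_top_ne_zero (hg : g.top ≠ 0) :
    g ^ 3 = base (Function.const _ (total g.fn)) := by
  ext p
  · simpa [pow_succ] using add_add_self g.top 0
  · simp only [pow_succ, pow_zero, one_mul, mul_fn]
    exact add_add_eq_total hg g.fn p

theorem pow_three_of_top_eq_zero (hg : g.top = 0) : g ^ 3 = base (3 • g.fn) := by
  rw [← base_pow, base_fn_of_top_eq_zero hg]

theorem three_smul_eq (ha : a ≠ 0) (v : ZMod 3 → A) :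
    3 • v = Function.const _ (total v) + (2 • diff a (diff a v) + diff a (diff a (diff a v))) := by
  ext p
  simp only [Pi.add_apply, Pi.smul_apply, Function.const_apply, ← add_add_eq_total ha v p, diff,
    add_add_self]
  abel

theorem diff_diff_diff (a : ZMod 3) (v : ZMod 3 → A) :
    diff a (diff a (diff a v)) = 3 • fun p => v (p + a) - v (p + a + a) := by
  ext p
  simp only [diff, add_add_self, Pi.smul_apply]
  abel

theorem total_diff (a : ZMod 3) (v : ZMod 3 → A) : total (diff a v) = 0 := by
  simp only [total, diff, Finset.sum_sub_distrib]
  exact sub_eq_zero.2 (Equiv.sum_comp (Equiv.addRight a) v)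

theorem three_smul_diff (ha : a ≠ 0) (v : ZMod 3 → A) : 3 • diff a v =
    2 • diff a (diff a (diff a v)) + diff a (diff a (diff a (diff a v))) := by
  rw [three_smul_eq ha, total_diff]
  exact zero_add _

theorem diff_diff_of_total_eq_zero (ha : a ≠ 0) (hv : total v = 0) (p : ZMod 3) :
    diff a (diff a v) p = (-3 : ℤ) • v (p + a) := by
  have h := add_add_eq_total ha v p
  rw [hv] at h
  rw [diff, diff, diff, ← sub_eq_zero, ← h]
  abel

theorem iterate_diff_odd (ha : a ≠ 0) (v : ZMod 3 → A) (m : ℕ) (p : ZMod 3) :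
    (diff a)^[2 * m + 1] v p = (-3 : ℤ) ^ m • diff a v (p + m * a) := by
  induction m generalizing p with
  | zero => simp
  | succ m ih =>
    rw [show 2 * (m + 1) + 1 = 2 * m + 1 + 1 + 1 by ring, Function.iterate_succ_apply',
      Function.iterate_succ_apply', diff_diff_of_total_eq_zero ha, ih, pow_succ', mul_smul,
      Nat.cast_succ, add_mul, one_mul, add_assoc, add_comm a]
    rw [Function.iterate_succ_apply']
    exact total_diff _ _

theorem s_add_two_eq (R : GQRelations c l k x y t s) (hj : j + 2 ≤ c) :
    s (j + 2) = base ((diff x.top)^[j] (s 2).fn) := by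
  induction j with
  | zero => exact (base_fn_of_top_eq_zero (R.two ▸ fcomm_top y x)).symm
  | succ j ih =>
    rw [add_right_comm, R.succ (j + 2) (by omega) (by omega), ih (by omega), fcomm_base,
      Function.iterate_succ_apply']

theorem s_eq_one_of_top_eq_zero (R : GQRelations c l k x y t s) (hx : x.top = 0) (hj : 3 ≤ j) :
    s j = 1 := by
  obtain hc | hc := Nat.lt_or_ge c j
  · exact R.eq_one j hc
  · obtain ⟨i, rfl⟩ : ∃ i, j = i + 1 + 2 := ⟨j - 3, by omega⟩
    rw [s_add_two_eq R hc, Function.iterate_succ_apply', hx, diff_zero, base_zero]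

theorem pow_three_eq_one_of_top_eq_zero (R : GQRelations c l k x y t s) (hc : 3 ≤ c)
    (hx : x.top = 0) : x ^ 3 = 1 ∧ y ^ 3 = 1 := by
  have hs := fun j hj => s_eq_one_of_top_eq_zero (j := j) R hx hj
  rw [R.x_cube, R.y_cube, hs c hc, hs 4 (by omega), hs 3 le_rfl]
  simp only [one_pow, mul_one, and_self]

theorem total_mul (g h : Wr A) : total (g * h).fn = total g.fn + total h.fn := by
  simp only [total, mul_fn, Finset.sum_add_distrib]
  exact congrArg (· + _) (Equiv.sum_comp (Equiv.addRight h.top) g.fn)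

theorem total_zero : total (0 : ZMod 3 → A) = 0 := Finset.sum_const_zero

theorem total_inv (g : Wr A) : total g⁻¹.fn = -total g.fn := by
  rw [eq_neg_iff_add_eq_zero, ← total_mul, inv_mul_cancel, one_fn, total_zero]

end Wr

end Wreath

/-! ### The two models of `G_Q` -/

section Residue

variable {m : ℕ}

theorem three_pow_eq_zero (m : ℕ) : (3 : ZMod (3 ^ m)) ^ m = 0 := by
  exact_mod_cast ZMod.natCast_self (3 ^ m)

/-- The embedding of `ℤ/3` in `ℤ/3ᵐ⁺¹` with `1 ↦ (-3)ᵐ`. -/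
def socle (m : ℕ) : ZMod 3 →+ ZMod (3 ^ (m + 1)) :=
  ZMod.lift 3 ⟨zmultiplesHom _ ((-3) ^ m), by
    have h := three_pow_eq_zero (m + 1)
    rw [zmultiplesHom_apply, zsmul_eq_mul, neg_pow]
    push_cast
    linear_combination (-1) ^ m * h⟩

/-- Reduction modulo `3`. -/
def red (m : ℕ) : ZMod (3 ^ (m + 1)) →+* ZMod 3 :=
  ZMod.castHom (dvd_pow_self 3 m.succ_ne_zero) _

theorem socle_red (b : ZMod (3 ^ (m + 1))) : socle m (red m b) = (-3) ^ m * b := by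
  obtain ⟨i, rfl⟩ := ZMod.intCast_surjective b
  rw [map_intCast, socle, ZMod.lift_coe, zmultiplesHom_apply, zsmul_eq_mul, mul_comm]

theorem red_socle (hm : 1 ≤ m) (b : ZMod 3) : red m (socle m b) = 0 := by
  obtain ⟨i, rfl⟩ := ZMod.intCast_surjective b
  have h : red m 3 = 0 := map_ofNat (red m) 3
  rw [← map_intCast (red m), socle_red, map_mul, map_pow, map_neg, h, neg_zero,
    zero_pow (by omega), zero_mul]

theorem socle_injective (m : ℕ) : Function.Injective (socle m) := by
  refine (ZMod.lift_injective _).2 fun i hi => ?_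
  rw [zmultiplesHom_apply, zsmul_eq_mul, neg_pow] at hi
  have h : ((3 ^ m * i : ℤ) : ZMod (3 ^ (m + 1))) = 0 := by
    have hsign : (-1 : ZMod (3 ^ (m + 1))) ^ m * (-1) ^ m = 1 := by
      rw [← mul_pow, neg_one_mul, neg_neg, one_pow]
    push_cast
    linear_combination (-1) ^ m * hi - 3 ^ m * i * hsign
  rw [ZMod.intCast_zmod_eq_zero_iff_dvd] at h ⊢
  push_cast at h
  rw [pow_succ] at h
  exact Int.dvd_of_mul_dvd_mul_left (by positivity) h

theorem red_eq_zero_of_three_smul (hm : 1 ≤ m) {b : ZMod (3 ^ (m + 1))} (hb : 3 • b = 0) :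
    red m b = 0 := by
  obtain ⟨n, rfl⟩ : ∃ n, m = n + 1 := ⟨m - 1, by omega⟩
  rw [nsmul_eq_mul] at hb
  apply socle_injective
  rw [socle_red, map_zero, pow_succ (-3 : ZMod _) n]
  push_cast at hb
  linear_combination -(-3) ^ n * hb

end Residue

namespace Wr

section ClassThree

variable {x y t : Wr (ZMod 3)} {s : ℕ → Wr (ZMod 3)} {c l k : ℕ}

theorem three_smul_eq_zero (v : ZMod 3 → ZMod 3) : 3 • v = 0 := by
  ext p
  rw [Pi.smul_apply, nsmul_eq_mul]
  exact zero_mul _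

theorem pow_three_eq_one {g : Wr (ZMod 3)} (hg : g.top = 0) : g ^ 3 = 1 := by
  rw [pow_three_of_top_eq_zero hg, three_smul_eq_zero, base_zero]

theorem exists_gqRelations_of_top_eq_zero (hc : 4 ≤ c) (hx : x.top = 0) (hy : y.top ≠ 0)
    (hy' : total y.fn = 0) (l k : ℕ) : ∃ t s, GQRelations c l k x y t s := by
  have h₂ := fcomm_top y x
  have T : Tail (conjHom x) (fun j => if j = 2 then fcomm y x else 1) c := by
    refine ⟨fun j hj => ?_, fun j hj => ?_, fun j hj => if_neg (by omega)⟩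
    · rw [if_neg (show j + 1 ≠ 2 by omega), mul_one]
      split_ifs
      · rw [← base_fn_of_top_eq_zero h₂, conjHom_base, hx, diff_zero, add_zero]
      · exact map_one _
    · rw [if_neg (show j + 2 ≠ 2 by omega), if_neg (show j + 3 ≠ 2 by omega), one_pow, mul_one]
      split_ifs
      exacts [pow_three_eq_one h₂, one_pow 3]
  refine ⟨_, _, T.gqRelations hc (if_pos rfl) rfl (pow_three_eq_one (fcomm_top _ _)) ?_ ?_⟩
  · rw [if_neg (by omega), one_pow, pow_three_eq_one hx]
  · rw [if_neg (by omega), if_neg (by omega), if_neg (by omega), pow_three_of_top_ne_zero hy, hy',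
      one_pow, one_pow, mul_one, mul_one]
    exact base_zero

theorem total_eq_zero_of_gqRelations (R : GQRelations c l k x y t s) (hc : 5 ≤ c)
    (hx : x.top ≠ 0) : total x.fn = 0 := by
  obtain ⟨j, rfl⟩ : ∃ j, c = 3 + j + 2 := ⟨c - 5, by omega⟩
  have hdiff : ∀ v, (diff x.top)^[3] v = (0 : ZMod 3 → ZMod 3) := fun v =>
    (diff_diff_diff x.top v).trans (three_smul_eq_zero _)
  have h := R.x_cube
  rw [s_add_two_eq R le_rfl, Function.iterate_add_apply, hdiff, base_zero, one_pow,
    pow_three_of_top_ne_zero hx] at h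
  exact congrFun (base_injective h) 0

end ClassThree

section MaximalClass

variable {m l k : ℕ} {x t : Wr (ZMod (3 ^ (m + 1)))} {s : ℕ → Wr (ZMod (3 ^ (m + 1)))}
  {a : ZMod 3} {v : ZMod 3 → ZMod (3 ^ (m + 1))}

/-- The slope of the reduction of `v` modulo `3`, which is an affine function on `ℤ/3` as soon as
its total is zero. -/
def slope (v : ZMod 3 → ZMod (3 ^ (m + 1))) : ZMod 3 := red m (v 2 - v 1)

theorem sub_eq_mul_of_total_eq_zero {f : ZMod 3 → ZMod 3} (hf : total f = 0) (p a : ZMod 3) :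
    f (p + a) - f p = a * (f 2 - f 1) := by
  revert p a hf f
  unfold total
  decide

theorem red_sub_eq_mul_slope (hv : red m (total v) = 0) (p a : ZMod 3) :
    red m (v (p + a) - v p) = a * slope v := by
  rw [slope, map_sub, map_sub]
  refine sub_eq_mul_of_total_eq_zero (f := fun p => red m (v p)) ?_ p a
  rwa [total, ← map_sum]

theorem slope_zero : slope (0 : ZMod 3 → ZMod (3 ^ (m + 1))) = 0 := by
  rw [slope, Pi.zero_apply, Pi.zero_apply, sub_zero, map_zero]

theorem slope_mul {g : Wr (ZMod (3 ^ (m + 1)))} (hg : red m (total g.fn) = 0)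
    (h : Wr (ZMod (3 ^ (m + 1)))) : slope (g * h).fn = slope g.fn + slope h.fn := by
  have h₁ := red_sub_eq_mul_slope hg 1 h.top
  have h₂ := red_sub_eq_mul_slope hg 2 h.top
  simp only [slope, mul_fn, map_sub, map_add] at h₁ h₂ ⊢
  linear_combination h₂ - h₁

theorem exists_total_slope (b d : ZMod (3 ^ (m + 1))) :
    ∃ v : ZMod 3 → ZMod (3 ^ (m + 1)), total v = b ∧ slope v = red m d := by
  refine ⟨![b - d, 0, d], (Fin.sum_univ_three _).trans ?_, congrArg (red m) (sub_zero d)⟩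
  change b - d + 0 + d = b
  ring

theorem iterate_diff_eq_socle (ha : a ≠ 0) (hv : red m (total v) = 0) :
    (diff a)^[2 * m + 1] v = Function.const _ (socle m (a * slope v)) := by
  ext p
  rw [iterate_diff_odd ha, diff, Function.const_apply,
    ← red_sub_eq_mul_slope hv (p + m * a), socle_red, zsmul_eq_mul]
  push_cast
  rfl

theorem tail_iterate_diff (hx : x.top ≠ 0) (hv : red m (total v) = 0) :
    Tail (conjHom x) (fun j => base ((diff x.top)^[j - 1] v)) (2 * m + 2) where
  shift j hj := by
    obtain ⟨j, rfl⟩ : ∃ i, j = i + 1 := ⟨j - 1, by omega⟩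
    rw [conjHom_base, base_mul, Nat.add_sub_cancel, Nat.add_sub_cancel,
      Function.iterate_succ_apply']
  cube j hj := by
    obtain ⟨j, rfl⟩ : ∃ i, j = i + 2 := ⟨j - 2, by omega⟩
    rw [base_pow, base_pow, base_mul]
    simp only [Nat.add_succ_sub_one, Function.iterate_succ_apply' (diff x.top)]
    rw [three_smul_diff hx]
  eq_one j hj := by
    obtain ⟨i, rfl⟩ : ∃ i, j = i + 1 + (2 * m + 1) + 1 := ⟨j - (2 * m + 3), by omega⟩
    rw [Nat.add_sub_cancel, Function.iterate_add_apply, iterate_diff_eq_socle hx hv,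
      Function.iterate_succ_apply, diff_const]
    exact congrArg base (Function.iterate_fixed (diff_const x.top 0) i)

theorem pow_three_eq_pow_iff (hx : x.top ≠ 0) (hv : red m (total v) = 0) :
    (x ^ 3 = base ((diff x.top)^[2 * m + 1] v) ^ l ↔
        total x.fn = l • socle m (x.top * slope v)) ∧
      (base v ^ 3 = base ((diff x.top)^[2 * m + 1] v) ^ k * base ((diff x.top)^[3] v) *
        base ((diff x.top)^[2] v) ^ 2 ↔ total v = k • socle m (x.top * slope v)) := by
  have hconst : ∀ b b' : ZMod (3 ^ (m + 1)), Function.const (ZMod 3) b = Function.const _ b' ↔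
      b = b' := fun b b' => Function.const_inj
  have hsmul : ∀ (n : ℕ) (b : ZMod (3 ^ (m + 1))),
      n • Function.const (ZMod 3) b = Function.const _ (n • b) := fun _ _ => rfl
  rw [iterate_diff_eq_socle hx hv]
  constructor
  · rw [pow_three_of_top_ne_zero hx, base_pow, base_injective.eq_iff, hsmul, hconst]
  · rw [base_pow, base_pow, base_pow, base_mul, base_mul, base_injective.eq_iff, three_smul_eq hx,
      hsmul, add_assoc, add_comm ((diff x.top)^[3] v), ← hconst]
    exact add_left_inj _

/-- The tail of a solution can only be the sequence of iterated differences of `v`, which satisfies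
all relations but those for `x³` and `y³`. -/
theorem exists_gqRelations_iff (hm : 1 ≤ m) (hx : x.top ≠ 0) (hv : red m (total v) = 0) :
    (∃ t s, GQRelations (2 * m + 2) l k x (base v) t s) ↔
      total x.fn = l • socle m (x.top * slope v) ∧ total v = k • socle m (x.top * slope v) := by
  obtain ⟨hl, hk⟩ := pow_three_eq_pow_iff (l := l) (k := k) hx hv
  rw [← hl, ← hk]
  constructor
  · rintro ⟨t, s, R⟩
    have hs : ∀ j, j + 2 ≤ 2 * m + 2 → s (j + 2) = base ((diff x.top)^[j + 1] v) := fun j hj => by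
      rw [s_add_two_eq R hj, R.two, fcomm_base, base_fn, Function.iterate_succ_apply]
    rw [← hs (2 * m) le_rfl, ← hs 2 (by omega), ← hs 1 (by omega)]
    exact ⟨R.x_cube, R.y_cube⟩
  · rintro ⟨hx₃, hy₃⟩
    refine ⟨1, _, (tail_iterate_diff hx hv).gqRelations (by omega) (fcomm_base x v).symm ?_
      (one_pow 3) hx₃ hy₃⟩
    rw [fcomm_base, base_top, diff_zero, base_zero]

end MaximalClass

section Compatible

variable {m l k l' k' : ℕ} {hm : 1 ≤ m} {x y : Wr (ZMod (3 ^ (m + 1))) × Wr (ZMod 3)}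
  {t₁ : Wr (ZMod (3 ^ (m + 1)))} {s₁ : ℕ → Wr (ZMod (3 ^ (m + 1)))}
  {t₂ : Wr (ZMod 3)} {s₂ : ℕ → Wr (ZMod 3)}

/-- The pairs of elements of the maximal class model and of the class three model of `G_Q` which
can come from one element of `G_Q`: the invariants of either component are determined by the
images of both in `ℤ/3`. -/
def compatible (hm : 1 ≤ m) (l k : ℕ) : Subgroup (Wr (ZMod (3 ^ (m + 1))) × Wr (ZMod 3)) where
  carrier := {g | total g.2.fn = g.1.top ∧ slope g.1.fn = g.2.top ∧
    total g.1.fn = socle m (l * g.1.top + k * g.2.top)}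
  mul_mem' := by
    rintro g h ⟨hg, hg', hg''⟩ ⟨hh, hh', hh''⟩
    refine ⟨?_, ?_, ?_⟩
    · rw [Prod.snd_mul, total_mul, hg, hh, Prod.fst_mul, mul_top]
    · rw [Prod.fst_mul, slope_mul (hg'' ▸ red_socle hm _), hg', hh', Prod.snd_mul, mul_top]
    · rw [Prod.fst_mul, total_mul, hg'', hh'', ← map_add, Prod.snd_mul, mul_top, mul_top]
      ring_nf
  one_mem' := ⟨total_zero, slope_zero, total_zero.trans (by simp)⟩
  inv_mem' := by
    rintro g ⟨hg, hg', hg''⟩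
    refine ⟨?_, ?_, ?_⟩
    · rw [Prod.snd_inv, total_inv, hg, Prod.fst_inv, inv_top]
    · have h := slope_mul (hg'' ▸ red_socle hm _) g.1⁻¹
      rw [mul_inv_cancel, one_fn, slope_zero, hg'] at h
      rw [Prod.fst_inv, Prod.snd_inv, inv_top]
      linear_combination -h
    · rw [Prod.fst_inv, total_inv, hg'', ← map_neg, Prod.snd_inv, inv_top, inv_top]
      ring_nf

theorem snd_top_eq_zero (hm₂ : 2 ≤ m) (hx : x ∈ compatible hm l' k')
    (R₁ : GQRelations (2 * m + 2) l k x.1 y.1 t₁ s₁)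
    (R₂ : GQRelations (2 * m + 2) l k x.2 y.2 t₂ s₂) : x.2.top = 0 := by
  obtain ⟨htop, hslope, -⟩ := hx
  by_contra hne
  have hx₁ : x.1.top = 0 := htop ▸ total_eq_zero_of_gqRelations R₂ (by omega) hne
  have hcube := (pow_three_eq_one_of_top_eq_zero R₁ (by omega) hx₁).1
  rw [pow_three_of_top_eq_zero hx₁] at hcube
  have hred : ∀ p, red m (x.1.fn p) = 0 := fun p =>
    red_eq_zero_of_three_smul hm (congrFun (base_injective hcube) p)
  exact hne (by rw [← hslope, slope, map_sub, hred, hred, sub_zero])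

theorem fst_top_eq_zero (hy : y ∈ compatible hm l' k')
    (R₂ : GQRelations (2 * m + 2) l k x.2 y.2 t₂ s₂) (hx : x.2.top = 0) (hy₂ : y.2.top ≠ 0) :
    y.1.top = 0 := by
  have hcube := (pow_three_eq_one_of_top_eq_zero R₂ (by omega : 3 ≤ 2 * m + 2) hx).2
  rw [pow_three_of_top_ne_zero hy₂] at hcube
  exact hy.1 ▸ congrFun (base_injective hcube) 0

theorem parameters_eq (hm₂ : 2 ≤ m) (hx : x ∈ compatible hm l' k') (hy : y ∈ compatible hm l' k')
    (R₁ : GQRelations (2 * m + 2) l k x.1 y.1 t₁ s₁)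
    (R₂ : GQRelations (2 * m + 2) l k x.2 y.2 t₂ s₂)
    (hgen₁ : x.1.top = 0 → y.1.top ≠ 0) (hgen₂ : x.2.top = 0 → y.2.top ≠ 0) :
    x.1.top ≠ 0 ∧ y.2.top ≠ 0 ∧ (l' : ZMod 3) = l * y.2.top ∧ (k' : ZMod 3) = k * x.1.top := by
  have hx₂ := snd_top_eq_zero hm₂ hx R₁ R₂
  have hy₂ := hgen₂ hx₂
  have hy₁ := fst_top_eq_zero hy R₂ hx₂ hy₂
  have hx₁ : x.1.top ≠ 0 := fun h => hgen₁ h hy₁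
  obtain ⟨-, -, hx_total⟩ := hx
  obtain ⟨-, hy_slope, hy_total⟩ := hy
  rw [← base_fn_of_top_eq_zero hy₁] at R₁
  obtain ⟨hl, hk⟩ := (exists_gqRelations_iff hm hx₁ (hy_total ▸ red_socle hm _)).1 ⟨_, _, R₁⟩
  rw [hx_total, hy_slope, ← map_nsmul, (socle_injective m).eq_iff, hx₂, nsmul_eq_mul] at hl
  rw [hy_total, hy_slope, ← map_nsmul, (socle_injective m).eq_iff, hy₁, nsmul_eq_mul] at hk
  refine ⟨hx₁, hy₂, mul_right_cancel₀ hx₁ ?_, mul_right_cancel₀ hy₂ ?_⟩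
  · linear_combination hl
  · linear_combination hk

end Compatible

end Wr

namespace GQPow

variable {m c l k l' k' : ℕ}

theorem exists_hom_compatible (hm : 1 ≤ m) (l k : ℕ) :
    ∃ f : GQPow (2 * m + 2) l k →* Wr (ZMod (3 ^ (m + 1))) × Wr (ZMod 3),
      (∀ g, f g ∈ Wr.compatible hm l k) ∧
        (f (mk _ l k xw)).1.top ≠ 0 ∧ (f (mk _ l k yw)).2.top ≠ 0 := by
  obtain ⟨v, hv, hv'⟩ := Wr.exists_total_slope (socle m l) 0
  obtain ⟨w, hw, hw'⟩ := Wr.exists_total_slope (socle m k) 1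
  obtain ⟨t₁, s₁, R₁⟩ := (Wr.exists_gqRelations_iff (x := ⟨1, v⟩) (v := w) (l := l) (k := k) hm
    one_ne_zero (hw ▸ red_socle hm _)).2 (by
      rw [hv, hw, hw', map_one, one_mul, ← map_nsmul, ← map_nsmul, nsmul_one, nsmul_one]
      exact ⟨rfl, rfl⟩)
  obtain ⟨t₂, s₂, R₂⟩ := Wr.exists_gqRelations_of_top_eq_zero (c := 2 * m + 2)
    (x := Wr.base (Pi.single 0 1)) (y := ⟨1, 0⟩) (by omega) rfl one_ne_zero Wr.total_zero l k
  obtain ⟨f₁, hx₁, hy₁⟩ := exists_hom R₁ (by omega)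
  obtain ⟨f₂, hx₂, hy₂⟩ := exists_hom R₂ (by omega)
  have hle : Subgroup.closure {mk _ l k xw, mk _ l k yw} ≤
      (Wr.compatible hm l k).comap (f₁.prod f₂) := by
    rw [Subgroup.closure_le]
    rintro _ (rfl | rfl)
    · change (f₁ _, f₂ _) ∈ Wr.compatible hm l k
      rw [hx₁, hx₂]
      refine ⟨Finset.sum_pi_single' 0 1 _, hv'.trans (map_zero _), hv.trans ?_⟩
      simp
    · change (f₁ _, f₂ _) ∈ Wr.compatible hm l k
      rw [hy₁, hy₂]
      refine ⟨Wr.total_zero, hw'.trans (map_one _), hw.trans ?_⟩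
      simp
  refine ⟨f₁.prod f₂, fun g => hle (closure_eq_top _ l k ▸ Subgroup.mem_top g), ?_, ?_⟩
  · change (f₁ _).top ≠ 0
    rw [hx₁]
    exact one_ne_zero
  · change (f₂ _).top ≠ 0
    rw [hy₂]
    exact one_ne_zero

theorem top_map_yw_ne_zero {A : Type*} [AddCommGroup A] {f : GQPow c l k →* Wr A} {g}
    (hg : (f g).top ≠ 0) (hx : (f (mk c l k xw)).top = 0) : (f (mk c l k yw)).top ≠ 0 := fun hy =>
  hg (DFunLike.congr_fun (hom_ext (f := (Wr.topHom A).comp f) (g := 1) hx hy) g)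

theorem eq_zero_iff_of_mulEquiv (hc : 6 ≤ c) (heven : Even c) (e : GQPow c l k ≃* GQPow c l' k') :
    ((l : ZMod 3) = 0 ↔ (l' : ZMod 3) = 0) ∧ ((k : ZMod 3) = 0 ↔ (k' : ZMod 3) = 0) := by
  obtain ⟨m, rfl⟩ : ∃ m, c = 2 * m + 2 := by
    obtain ⟨n, rfl⟩ := heven
    exact ⟨n - 1, by omega⟩
  obtain ⟨f, hf, hx, hy⟩ := exists_hom_compatible (m := m) (by omega) l' k'
  have hgen {A : Type} [AddCommGroup A] (π : Wr (ZMod (3 ^ (m + 1))) × Wr (ZMod 3) →* Wr A) {g}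
      (hg : (π (f g)).top ≠ 0) := top_map_yw_ne_zero
    (f := (π.comp f).comp e.toMonoidHom) (g := e.symm g) (by simpa using hg)
  have R := ((gqRelations _ l k).map e.toMonoidHom).map f
  obtain ⟨hx', hy', hl, hk⟩ := Wr.parameters_eq (by omega) (hf _) (hf _)
    (R.map (MonoidHom.fst _ _)) (R.map (MonoidHom.snd _ _))
    (hgen (MonoidHom.fst _ _) hx) (hgen (MonoidHom.snd _ _) hy)
  rw [hl, hk, mul_eq_zero_iff_right hy', mul_eq_zero_iff_right hx']
  exact ⟨Iff.rfl, Iff.rfl⟩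

end GQPow

theorem GQ_iso_and_four_nonisomorphic_of_even (c : ℕ) (hc : 6 ≤ c) (heven : Even c) :
    (∀ Rx ∈ RxSet c, Nonempty (GQ c Rx (Ry1 c) ≃* GQ c Rx (Ry2 c))) ∧
    List.Pairwise (fun p q => IsEmpty (GQ c p.1 p.2 ≃* GQ c q.1 q.2))
      [(xw ^ 3, Ry0), (xw ^ 3 * (sw c)⁻¹, Ry0),
       (xw ^ 3, Ry1 c), (xw ^ 3 * (sw c)⁻¹, Ry1 c)] := by
  have hne : ∀ l k l' k' : ℕ, ¬(((l : ZMod 3) = 0 ↔ (l' : ZMod 3) = 0) ∧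
      ((k : ZMod 3) = 0 ↔ (k' : ZMod 3) = 0)) → IsEmpty (GQPow c l k ≃* GQPow c l' k') :=
    fun _ _ _ _ h => ⟨fun e => h (GQPow.eq_zero_iff_of_mulEquiv hc heven e)⟩
  rw [RxSet, ← relX_one, ← relX_zero c, ← relY_zero c, ← relY_one, ← relY_two]
  constructor
  · rintro _ (rfl | rfl)
    · exact GQPow.nonempty_mulEquiv hc heven (.inl rfl) (dvd_refl 3)
    · exact GQPow.nonempty_mulEquiv hc heven (.inr rfl) (dvd_refl 3)
  · simp only [List.pairwise_cons, List.mem_cons, List.not_mem_nil, or_false, forall_eq_or_imp,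
      forall_eq, IsEmpty.forall_iff, implies_true, List.Pairwise.nil, and_true]
    exact ⟨⟨hne _ _ _ _ (by decide), hne _ _ _ _ (by decide), hne _ _ _ _ (by decide)⟩,
      ⟨hne _ _ _ _ (by decide), hne _ _ _ _ (by decide)⟩, hne _ _ _ _ (by decide)⟩
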